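/- arXiv:2505.11226 — 2 statements merged into one kernel-verified Lean document; each statement's English description precedes it below -/
import Mathlib

section
/- Fix integers n ≥ 2, D ≥ 2 and k₁,…,kₙ ≥ 1. Let M denote the set of polynomials F ∈ ℤ[Y,X₁,…,Xₙ] that are monic in Y with deg_Y F = D and deg_{X_i} F ≤ k_i for i = 1,…,n. Then there is a constant C, depending only on n, D, k₁,…,kₙ, such that for every real T ≥ 1: #{F ∈ M : ‖F‖ ≤ T and F is not strongly (1,n)-allowable} ≤ (C/T) · #{F ∈ M : ‖F‖ ≤ T}. -/
open Polynomial

noncomputable section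

/-- The rational function field `ℚ(X₁,…,Xₙ)`. -/
abbrev RF (n : ℕ) := FractionRing (MvPolynomial (Fin n) ℚ)

/-- Base change a polynomial `F ∈ ℤ[Y,X₁,…,Xₙ]` (written as a polynomial in `Y`
with coefficients in `ℤ[X₁,…,Xₙ]`) to `ℚ[Y,X₁,…,Xₙ]`. -/
def toQ {n : ℕ} (F : Polynomial (MvPolynomial (Fin n) ℤ)) :
    Polynomial (MvPolynomial (Fin n) ℚ) :=
  F.map (MvPolynomial.map (Int.castRingHom ℚ))

/-- View a polynomial in `ℚ[X][Y]` as a polynomial in `ℚ(X)[Y]`. -/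
def toFracQ {n : ℕ} (F : Polynomial (MvPolynomial (Fin n) ℚ)) : Polynomial (RF n) :=
  F.map (algebraMap (MvPolynomial (Fin n) ℚ) (RF n))

/-- View a polynomial in `ℤ[X][Y]` as a polynomial in `ℚ(X)[Y]`. -/
def toFrac {n : ℕ} (F : Polynomial (MvPolynomial (Fin n) ℤ)) : Polynomial (RF n) :=
  toFracQ (toQ F)

/-- The degree of `F(Y,X)` in the variable `Xᵢ`. -/
def degX {n : ℕ} {R : Type*} [CommSemiring R]
    (F : Polynomial (MvPolynomial (Fin n) R)) (i : Fin n) : ℕ :=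
  F.support.sup fun k => (F.coeff k).degreeOf i

/-- The total degree of `F(Y,X₁,…,Xₙ)` as a polynomial in `n+1` variables. -/
def totalDeg {n : ℕ} {R : Type*} [CommSemiring R]
    (F : Polynomial (MvPolynomial (Fin n) R)) : ℕ :=
  F.support.sup fun k => k + (F.coeff k).totalDegree

/-- `‖g‖`: the maximum absolute value of a coefficient of `g ∈ ℤ[X₁,…,Xₙ]`. -/
def mvNorm {n : ℕ} (g : MvPolynomial (Fin n) ℤ) : ℕ :=
  g.support.sup fun m => (g.coeff m).natAbs

/-- `‖F‖`: the maximum absolute value of a coefficient of `F ∈ ℤ[Y,X₁,…,Xₙ]`. -/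
def polyNorm {n : ℕ} (F : Polynomial (MvPolynomial (Fin n) ℤ)) : ℕ :=
  F.support.sup fun k => mvNorm (F.coeff k)

/-- The counting function
`N(F,B) = #{x ∈ ℤⁿ ∩ [−B,B]ⁿ : ∃ y ∈ ℤ, F(y,x) = 0}`. -/
def NFB {n : ℕ} (F : Polynomial (MvPolynomial (Fin n) ℤ)) (B : ℝ) : ℕ :=
  Set.ncard {x : Fin n → ℤ | (∀ i, |(x i : ℝ)| ≤ B) ∧
    ∃ y : ℤ, Polynomial.eval y (F.map (MvPolynomial.eval x)) = 0}

/-- `F ∈ ℤ[Y,X₁,…,Xₙ]` is absolutely irreducible: irreducible over `ℚ̄`. -/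
def AbsIrred {n : ℕ} (F : Polynomial (MvPolynomial (Fin n) ℤ)) : Prop :=
  Irreducible (F.map (MvPolynomial.map (Int.castRingHom (AlgebraicClosure ℚ))))

/-- `G` has positive degree in `Y` and in each variable `Xᵢ`. -/
def AllPosDeg {n : ℕ} (G : Polynomial (MvPolynomial (Fin n) ℤ)) : Prop :=
  0 < G.natDegree ∧ ∀ i : Fin n, 0 < degX G i

/-- A field extension `M` of `ℚ(X₁,…,Xₙ)` is an `n`-genuine extension: every
`G ∈ ℤ[Y,X₁,…,Xₙ]` irreducible over `ℚ(X)` with `M ≅ ℚ(X)[Y]/(G)` has positive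
degree in each of `Y, X₁, …, Xₙ`. -/
def IsGenuineExt (n : ℕ) (M : Type*) [Field M] [Algebra (RF n) M] : Prop :=
  ∀ G : Polynomial (MvPolynomial (Fin n) ℤ), Irreducible (toFrac G) →
    Nonempty (AdjoinRoot (toFrac G) ≃ₐ[RF n] M) → AllPosDeg G

/-- A field extension `M` of `ℚ(X₁,…,Xₙ)` is strongly `n`-genuine: every
intermediate field strictly containing `ℚ(X)` is `n`-genuine. -/
def IsStronglyGenuineExt (n : ℕ) (M : Type*) [Field M] [Algebra (RF n) M] : Prop :=
  ∀ M' : IntermediateField (RF n) M, M' ≠ ⊥ → IsGenuineExt n M'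

/-- The extension `ℚ(X)[Y]/(Fq)` presented by `Fq ∈ ℚ[X][Y]` is `n`-genuine. -/
def GenuineExtOfQ {n : ℕ} (Fq : Polynomial (MvPolynomial (Fin n) ℚ)) : Prop :=
  ∀ G : Polynomial (MvPolynomial (Fin n) ℤ), Irreducible (toFrac G) →
    Nonempty (AdjoinRoot (toFrac G) ≃ₐ[RF n] AdjoinRoot (toFracQ Fq)) → AllPosDeg G

/-- The extension `ℚ(X)[Y]/(Fq)` presented by `Fq ∈ ℚ[X][Y]` is strongly
`n`-genuine: for any field `M` isomorphic over `ℚ(X)` to `ℚ(X)[Y]/(Fq)`, every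
intermediate field strictly containing `ℚ(X)` is `n`-genuine. -/
def StronglyGenuineExtOfQ {n : ℕ} (Fq : Polynomial (MvPolynomial (Fin n) ℚ)) : Prop :=
  ∀ (M : Type) [Field M] [Algebra (RF n) M],
    Nonempty (AdjoinRoot (toFracQ Fq) ≃ₐ[RF n] M) → IsStronglyGenuineExt n M

/-- An absolutely irreducible `F ∈ ℤ[Y,X₁,…,Xₙ]` is an `n`-genuine polynomial. -/
def IsGenuinePoly {n : ℕ} (F : Polynomial (MvPolynomial (Fin n) ℤ)) : Prop :=
  AbsIrred F ∧ GenuineExtOfQ (toQ F)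

/-- An absolutely irreducible `F ∈ ℤ[Y,X₁,…,Xₙ]` is a strongly `n`-genuine polynomial. -/
def IsStronglyGenuinePoly {n : ℕ} (F : Polynomial (MvPolynomial (Fin n) ℤ)) : Prop :=
  AbsIrred F ∧ StronglyGenuineExtOfQ (toQ F)

/-- The ring map `ℚ[X₁,…,Xₙ] → ℚ[X₁,…,Xₙ]` induced by the linear substitution
`Xᵢ ↦ Σⱼ σᵢⱼ Xⱼ`. -/
def lsubMv {n : ℕ} (σ : Matrix (Fin n) (Fin n) ℚ) :
    MvPolynomial (Fin n) ℚ →+* MvPolynomial (Fin n) ℚ :=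
  (MvPolynomial.aeval (R := ℚ)
    fun i => ∑ j, MvPolynomial.C (σ i j) * MvPolynomial.X j).toRingHom

/-- `F_σ(Y,X) := F(Y,σ(X))` for a linear change of variables `σ`. -/
def applyGL {n : ℕ} (σ : Matrix (Fin n) (Fin n) ℚ)
    (Fq : Polynomial (MvPolynomial (Fin n) ℚ)) : Polynomial (MvPolynomial (Fin n) ℚ) :=
  Fq.map (lsubMv σ)

/-- `F` is `(1,n)`-allowable: absolutely irreducible, monic in `Y`, and
`ℚ(X)[Y]/(F_σ)` is an `n`-genuine extension for every `σ ∈ GLₙ(ℚ)`. -/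
def IsAllowable {n : ℕ} (F : Polynomial (MvPolynomial (Fin n) ℤ)) : Prop :=
  AbsIrred F ∧ F.Monic ∧
    ∀ σ : Matrix (Fin n) (Fin n) ℚ, IsUnit σ.det → GenuineExtOfQ (applyGL σ (toQ F))

/-- `F` is strongly `(1,n)`-allowable: absolutely irreducible, monic in `Y`, and
`ℚ(X)[Y]/(F_σ)` is a strongly `n`-genuine extension for every `σ ∈ GLₙ(ℚ)`. -/
def IsStronglyAllowable {n : ℕ} (F : Polynomial (MvPolynomial (Fin n) ℤ)) : Prop :=
  AbsIrred F ∧ F.Monic ∧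
    ∀ σ : Matrix (Fin n) (Fin n) ℚ, IsUnit σ.det → StronglyGenuineExtOfQ (applyGL σ (toQ F))

/-- `F` has the form (1.2) with parameter `m`:
`F = Y^{md} + f₁(X) Y^{m(d-1)} + ⋯ + f_{d-1}(X) Y^m + f_d(X)` with `f_d ≠ 0`. -/
def HasForm (n m : ℕ) (F : Polynomial (MvPolynomial (Fin n) ℤ)) : Prop :=
  ∃ (d : ℕ) (f : ℕ → MvPolynomial (Fin n) ℤ), 1 ≤ d ∧ f d ≠ 0 ∧
    F = Polynomial.X ^ (m * d) +
      ∑ j ∈ Finset.Icc 1 d, Polynomial.C (f j) * Polynomial.X ^ (m * (d - j))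

/-- `P` has a linear factor in `Y`: `P = (Y − Q(X))·H̃(Y,X)`. -/
def HasLinearFactorY {n : ℕ} {R : Type*} [CommRing R]
    (P : Polynomial (MvPolynomial (Fin n) R)) : Prop :=
  ∃ (Q : MvPolynomial (Fin n) R) (H : Polynomial (MvPolynomial (Fin n) R)),
    P = (Polynomial.X - Polynomial.C Q) * H

/-- The canonical map `ℚ[X₁,…,Xₙ] → ℚ(X)[Y]/(F)`. -/
def structMap {n : ℕ} (F : Polynomial (MvPolynomial (Fin n) ℤ)) :
    MvPolynomial (Fin n) ℚ →+* AdjoinRoot (toFrac F) :=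
  (algebraMap (RF n) (AdjoinRoot (toFrac F))).comp
    (algebraMap (MvPolynomial (Fin n) ℚ) (RF n))

/-- `z ∈ ℚ(X)[Y]/(F)` lies in the subfield `ℚ((Xᵢ)_{i≠j})`: it can be written
as a quotient of two polynomials not involving `Xⱼ`. -/
def CoordMem {n : ℕ} (j : Fin n) (F : Polynomial (MvPolynomial (Fin n) ℤ))
    (z : AdjoinRoot (toFrac F)) : Prop :=
  ∃ a b : MvPolynomial (Fin n) ℚ,
    MvPolynomial.degreeOf j a = 0 ∧ MvPolynomial.degreeOf j b = 0 ∧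
    structMap F b ≠ 0 ∧ z * structMap F b = structMap F a

/-- `z ∈ ℚ(X)[Y]/(F)` is algebraic over the subfield `ℚ((Xᵢ)_{i≠j})`. -/
def AlgOverCoord {n : ℕ} (j : Fin n) (F : Polynomial (MvPolynomial (Fin n) ℤ))
    (z : AdjoinRoot (toFrac F)) : Prop :=
  ∃ P : Polynomial (AdjoinRoot (toFrac F)), P ≠ 0 ∧ (∀ k, CoordMem j F (P.coeff k)) ∧
    Polynomial.eval z P = 0

/-- Substitute `Xᵢ = xᵢ` for `i ∈ I` into `F`, over `ℚ̄`. -/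
def substSome {n : ℕ} (I : Finset (Fin n)) (x : Fin n → ℚ)
    (F : Polynomial (MvPolynomial (Fin n) ℤ)) :
    Polynomial (MvPolynomial (Fin n) (AlgebraicClosure ℚ)) :=
  (toQ F).map
    ((MvPolynomial.aeval (R := ℚ) fun i =>
      if i ∈ I then MvPolynomial.C (algebraMap ℚ (AlgebraicClosure ℚ) (x i))
      else MvPolynomial.X i).toRingHom)

/-- Substitute `Xᵢ = xᵢ` for all `i ≠ i₀` into `F`, over `ℚ̄`. -/
def substKeepFirst {n : ℕ} (i0 : Fin n) (x : {i : Fin n // i ≠ i0} → ℤ)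
    (F : Polynomial (MvPolynomial (Fin n) ℤ)) :
    Polynomial (MvPolynomial (Fin n) (AlgebraicClosure ℚ)) :=
  F.map
    ((MvPolynomial.aeval (R := ℤ) fun i =>
      if h : i = i0 then (MvPolynomial.X i : MvPolynomial (Fin n) (AlgebraicClosure ℚ))
      else MvPolynomial.C ((x ⟨i, h⟩ : ℤ) : AlgebraicClosure ℚ)).toRingHom)

/-- `‖L‖`: maximum absolute value of an entry of an integer matrix. -/
def matNorm {n : ℕ} (L : Matrix (Fin n) (Fin n) ℤ) : ℕ :=
  Finset.univ.sup fun p : Fin n × Fin n => (L p.1 p.2).natAbs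

/-- The standard additive character `e_p(a) = exp(2πi a/p)` on `ZMod p`. -/
def eZp (p : ℕ) (a : ZMod p) : ℂ :=
  Complex.exp (2 * Real.pi * Complex.I * (a.val : ℂ) / (p : ℂ))

/-!
Suppose that `F` has support in the box `m ≤ κ = (k₁, …, kₙ)` and that the coefficient `c` of
`Y ^ (D - 1) X ^ κ` is nonzero. Restricted to any line `X + x v`, the lower coefficients of `F` have
degree at most `N = ∑_{vᵢ ≠ 0} kᵢ` in `x`, with equality for that of `Y ^ (D - 1)`, so after the
rescaling `Y ↦ x ^ N Y` the reduction of `F` at `x = ∞` is `Y ^ (D - 1) (Y + c')` with `c' ≠ 0`. By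
Hensel's lemma `F` has a root in `K((x⁻¹))` with `K = ℚ(X)`; thus `M = ℚ(X)[Y]/(F_σ)` embeds in
`K((t))` over the substitution `X ↦ X + t⁻¹ v`. If `M' ⊆ M` is defined by a `G` free of `Xᵢ`, take
`v` to be the `i`-th basis vector: `G` has coefficients in `K` and a root in `K((t))`, hence a root
in `K`, because `K` is algebraically closed in `K((t))`. So `M' = ℚ(X)`.

For absolute irreducibility, view `F(Y, x, …, x)` as a polynomial in `x`. Its leading coefficient
has degree exactly `D - 1` in `Y`. If it has no factor free of `x`, then in a factorization into
monic factors each factor has leading coefficient of degree in `Y` strictly smaller than its own;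
these degrees add up to `D - 1`, so there is only one factor. A factor free of `x` is excluded if
the coefficients of `x ^ 0` and of `x ^ (k₁ + ⋯ + kₙ)` are coprime.

Varying `c` alone, at most one value is bad; varying the constant coefficient alone, at most
`D - 1` values destroy coprimality. Each coefficient ranges over `2 ⌊T⌋ + 1 ≥ T` integers.
-/

open scoped PowerSeries

theorem algebraicClosure_eq_bot_of_retraction {K A L : Type*} [Field K] [CommRing A]
    [IsIntegrallyClosed A] [Field L] [Algebra K A] [Algebra K L] [Algebra A L]
    [IsScalarTower K A L] [IsFractionRing A L] (ε : A →ₐ[K] K) : algebraicClosure K L = ⊥ := by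
  have exists_lift {x : L} (hx : IsAlgebraic K x) : ∃ a : A, algebraMap A L a = x :=
    IsIntegrallyClosed.isIntegral_iff.mp hx.isIntegral.tower_top
  refine bot_unique fun z hz => ?_
  have hz : IsAlgebraic K z := mem_algebraicClosure_iff.mp hz
  obtain ⟨a, rfl⟩ := exists_lift hz
  set u := a - algebraMap K A (ε a) with hu
  have hεu : ε u = 0 := by simp [hu]
  have hu_alg : IsAlgebraic K (algebraMap A L u) := by
    rw [hu, map_sub, ← IsScalarTower.algebraMap_apply]
    exact hz.sub (isAlgebraic_algebraMap _)
  obtain ⟨w, hw⟩ := exists_lift hu_alg.inv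
  have hu_zero : algebraMap A L u = 0 := by
    by_contra hne
    have hwu : w * u = 1 := IsFractionRing.injective A L <| by
      rw [map_mul, hw, inv_mul_cancel₀ hne, map_one]
    simpa [hεu] using congrArg ε hwu
  rw [hu, map_sub, sub_eq_zero, ← IsScalarTower.algebraMap_apply] at hu_zero
  exact IntermediateField.mem_bot.mpr ⟨ε a, hu_zero.symm⟩

theorem intermediateField_eq_bot_of_adjoinRoot_equiv {K M L : Type*} [Field K] [Field M] [Field L]
    [Algebra K M] [Algebra K L] (hL : algebraicClosure K L = ⊥) {G : K[X]} (hG : Irreducible G)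
    {M' : IntermediateField K M} (e : AdjoinRoot G ≃ₐ[K] M') (Ψ : M →+* L)
    (hΨ : G.map (Ψ.comp (algebraMap K M)) = G.map (algebraMap K L)) : M' = ⊥ := by
  let θ : M' := e (AdjoinRoot.root G)
  have hθ : aeval (θ : M) G = 0 := by
    have h : aeval θ G = 0 := by
      rw [aeval_algEquiv, AlgHom.comp_apply]
      simp
    simpa using congrArg (algebraMap M' M) h
  have hΨθ : aeval (Ψ θ) G = 0 := by
    rw [aeval_def, eval₂_eq_eval_map, ← hΨ, ← eval₂_eq_eval_map, ← hom_eval₂, ← aeval_def, hθ,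
      map_zero]
  obtain ⟨c, hc⟩ : ∃ c, algebraMap K L c = Ψ θ := by
    rw [← Set.mem_range, ← IntermediateField.mem_bot, ← hL, mem_algebraicClosure_iff]
    exact ⟨G, hG.ne_zero, hΨθ⟩
  have hroot : G.IsRoot c := by
    rwa [← hc, aeval_algebraMap_apply, map_eq_zero] at hΨθ
  rw [← IntermediateField.finrank_eq_one_iff, ← e.toLinearEquiv.finrank_eq,
    (AdjoinRoot.powerBasis hG.ne_zero).finrank, AdjoinRoot.powerBasis_dim]
  exact natDegree_eq_of_degree_eq_some (degree_eq_one_of_irreducible_of_root hG hroot)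

section LaurentField

variable (K : Type*) [Field K]

/-- The field `K((t))`, realized as the fraction field of `K⟦t⟧` so that its `K`-algebra and
`K[t]`-algebra structures are those induced from `K⟦t⟧`. -/
abbrev LaurentField := FractionRing K⟦X⟧

/-- The variable `t` of `K((t))`. -/
abbrev uniformizer : LaurentField K := algebraMap K⟦X⟧ (LaurentField K) PowerSeries.X

theorem algebraicClosure_laurentField : algebraicClosure K (LaurentField K) = ⊥ :=
  algebraicClosure_eq_bot_of_retraction (A := K⟦X⟧)
    (.mk' (PowerSeries.constantCoeff (R := K)) fun c x => by simp)

theorem transcendental_inv_uniformizer : Transcendental K (uniformizer K)⁻¹ := by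
  rw [Transcendental, IsAlgebraic.inv_iff, ← mem_algebraicClosure_iff,
    algebraicClosure_laurentField, IntermediateField.mem_bot]
  rintro ⟨c, hc⟩
  rw [IsScalarTower.algebraMap_apply K K⟦X⟧] at hc
  simpa using congrArg (PowerSeries.coeff 1) (IsFractionRing.injective K⟦X⟧ _ hc)

/-- The expansion at infinity `K[x] → K((t))`, `x ↦ t⁻¹`. -/
def expandAtInfinity : K[X] →ₐ[K] LaurentField K :=
  aeval (uniformizer K)⁻¹

theorem expandAtInfinity_injective : Function.Injective (expandAtInfinity K) :=
  transcendental_iff_injective.mp (transcendental_inv_uniformizer K)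

variable {K}

theorem aeval_uniformizer (p : K[X]) :
    aeval (uniformizer K) p = algebraMap K⟦X⟧ (LaurentField K) p := by
  have uniformizer_eq : uniformizer K = algebraMap K[X] (LaurentField K) X := by
    rw [IsScalarTower.algebraMap_apply K[X] K⟦X⟧, PowerSeries.algebraMap_apply', coe_X,
      PowerSeries.map_X]
  rw [uniformizer_eq, aeval_algebraMap_apply, aeval_X_left_apply,
    IsScalarTower.algebraMap_apply K[X] K⟦X⟧, PowerSeries.algebraMap_apply',
    Algebra.algebraMap_self, PowerSeries.map_id, id_eq]

theorem expandAtInfinity_mul_uniformizer_pow {p : K[X]} {N : ℕ} (hp : p.natDegree ≤ N) :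
    expandAtInfinity K p * uniformizer K ^ N =
      algebraMap K⟦X⟧ (LaurentField K) (reflect N p : K[X]) := by
  have uniformizer_ne_zero : uniformizer K ≠ 0 := by simp
  let := invertibleOfNonzero (inv_ne_zero uniformizer_ne_zero)
  have h := eval₂_reflect_mul_pow (algebraMap K (LaurentField K)) (uniformizer K)⁻¹ N p hp
  rw [invOf_eq_inv, inv_inv, ← aeval_def, ← aeval_def, aeval_uniformizer] at h
  rw [expandAtInfinity, ← h, mul_assoc, ← mul_pow, inv_mul_cancel₀ uniformizer_ne_zero, one_pow,
    mul_one]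

theorem exists_isRoot_of_simple_root_constantCoeff {g : K⟦X⟧[X]} (hg : g.Monic) {a : K}
    (ha : (g.map PowerSeries.constantCoeff).IsRoot a)
    (ha' : (g.map PowerSeries.constantCoeff).derivative.eval a ≠ 0) : ∃ z, g.IsRoot z := by
  have constantCoeff_eval (p : K⟦X⟧[X]) : PowerSeries.constantCoeff
      (p.eval (PowerSeries.C a)) = (p.map PowerSeries.constantCoeff).eval a := by
    nth_rw 2 [← PowerSeries.constantCoeff_C a]
    rw [eval_map, eval₂_at_apply]
  obtain ⟨z, hz, -⟩ := HenselianRing.is_henselian (I := Ideal.span {(PowerSeries.X : K⟦X⟧)})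
    g hg (PowerSeries.C a) (by
      rw [Ideal.mem_span_singleton, PowerSeries.X_dvd_iff, constantCoeff_eval]
      exact ha) (by
      refine IsUnit.map _ ?_
      rw [PowerSeries.isUnit_iff_constantCoeff, constantCoeff_eval, ← derivative_map,
        isUnit_iff_ne_zero]
      exact ha')
  exact ⟨z, hz⟩

/-- The polynomial `t ^ (N * deg f) * f(t⁻¹, t ^ (-N) * Y)` over `K⟦t⟧`, for `f ∈ K[X][Y]` monic in
`Y` with coefficients of degree at most `N`: it rescales the roots of `f` at infinity so that they
become integral. -/
def rescaleAtInfinity (N : ℕ) (f : K[X][X]) : K⟦X⟧[X] :=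
  X ^ f.natDegree + ∑ j ∈ Finset.range f.natDegree,
    C ((reflect N (f.coeff j) : K[X]) * (PowerSeries.X : K⟦X⟧) ^ (N * (f.natDegree - 1 - j))) *
      X ^ j

theorem monic_rescaleAtInfinity (N : ℕ) (f : K[X][X]) : (rescaleAtInfinity N f).Monic :=
  monic_X_pow_add <| by
    rw [Finset.sum_range]
    exact degree_sum_fin_lt fun (j : Fin f.natDegree) =>
      ((reflect N (f.coeff j) : K[X]) * (PowerSeries.X : K⟦X⟧) ^ (N * (f.natDegree - 1 - j)))

theorem map_constantCoeff_rescaleAtInfinity {f : K[X][X]} {d N : ℕ} (hd : f.natDegree = d + 1)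
    (hN : 0 < N) : (rescaleAtInfinity N f).map PowerSeries.constantCoeff =
      X ^ d * (X + C ((f.coeff d).coeff N)) := by
  have lower_terms : ∑ j ∈ Finset.range d, (C (PowerSeries.constantCoeff
      ((reflect N (f.coeff j) : K[X]) * (PowerSeries.X : K⟦X⟧) ^ (N * (d - j)))) : K[X]) * X ^ j =
        0 :=
    Finset.sum_eq_zero fun j hj => by
      have : N * (d - j) ≠ 0 :=
        Nat.mul_ne_zero hN.ne' (Nat.sub_ne_zero_of_lt (Finset.mem_range.mp hj))
      simp [this]
  simp only [rescaleAtInfinity, hd, Nat.add_sub_cancel, Polynomial.map_add, Polynomial.map_pow,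
    map_X, Polynomial.map_sum, Polynomial.map_mul, map_C, Finset.sum_range_succ, lower_terms,
    zero_add, Nat.sub_self, mul_zero, pow_zero, mul_one]
  simp only [← PowerSeries.coeff_zero_eq_constantCoeff_apply, coeff_coe, coeff_reflect,
    revAt_zero]
  ring

theorem algebraMap_eval_rescaleAtInfinity {f : K[X][X]} (hf : f.Monic) {N : ℕ}
    (hdeg : ∀ j, (f.coeff j).natDegree ≤ N) {z : K⟦X⟧} {y : LaurentField K}
    (hzy : algebraMap K⟦X⟧ (LaurentField K) z = uniformizer K ^ N * y) :
    algebraMap K⟦X⟧ (LaurentField K) ((rescaleAtInfinity N f).eval z) =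
      (uniformizer K ^ N) ^ f.natDegree *
        f.eval₂ (expandAtInfinity K : K[X] →+* LaurentField K) y := by
  conv_rhs => arg 2; rw [hf.as_sum]
  simp only [rescaleAtInfinity, eval_add, eval_pow, eval_X, eval_finsetSum, eval_mul, eval_C,
    eval₂_add, eval₂_pow, eval₂_X, eval₂_finsetSum, eval₂_mul, eval₂_C, map_add, map_pow, map_sum,
    map_mul, mul_add, Finset.mul_sum, ← expandAtInfinity_mul_uniformizer_pow (hdeg _),
    RingHom.coe_coe, hzy, mul_pow]
  refine congrArg₂ _ rfl (Finset.sum_congr rfl fun j hj => ?_)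
  obtain ⟨l, hl⟩ := Nat.exists_eq_add_of_lt (Finset.mem_range.mp hj)
  rw [hl, show j + l + 1 - 1 - j = l by omega]
  ring

theorem exists_root_at_infinity {f : K[X][X]} (hf : f.Monic) {d N : ℕ}
    (hd : f.natDegree = d + 1) (hN : 0 < N) (hdeg : ∀ j, (f.coeff j).natDegree ≤ N)
    (hlead : (f.coeff d).coeff N ≠ 0) :
    ∃ y, f.eval₂ (expandAtInfinity K : K[X] →+* LaurentField K) y = 0 := by
  obtain ⟨z, hz⟩ := exists_isRoot_of_simple_root_constantCoeff (monic_rescaleAtInfinity N f)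
    (a := -(f.coeff d).coeff N) (by simp [map_constantCoeff_rescaleAtInfinity hd hN, IsRoot])
    (by simp [map_constantCoeff_rescaleAtInfinity hd hN, hlead])
  have uniformizer_pow_ne_zero : uniformizer K ^ N ≠ 0 := by simp
  refine ⟨algebraMap _ _ z / uniformizer K ^ N, ?_⟩
  have h := algebraMap_eval_rescaleAtInfinity hf hdeg (z := z)
    (mul_div_cancel₀ _ uniformizer_pow_ne_zero).symm
  rw [hz.eq_zero, map_zero] at h
  exact (mul_eq_zero.mp h.symm).resolve_left (by simp)

end LaurentField

section Exponents

variable {ι : Type*} {m κ : ι →₀ ℕ}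

theorem filter_le_filter_of_le (P : ι → Prop) [DecidablePred P] (h : m ≤ κ) :
    m.filter P ≤ κ.filter P := fun i => by
  by_cases hi : P i <;> simp [hi, h i]

theorem eq_of_le_of_degree_eq (h : m ≤ κ) (hdeg : m.degree = κ.degree) : m = κ := by
  obtain ⟨r, rfl⟩ := exists_add_of_le h
  have degree_r : r.degree = 0 := by simpa using hdeg
  rw [(Finsupp.degree_eq_zero_iff r).mp degree_r, add_zero]

end Exponents

section Translate

variable {ι R : Type*} [CommRing R]

/-- The substitution `Xᵢ ↦ Xᵢ + vᵢ x`, where `x` is a new variable. -/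
def translateAlong (v : ι → R) : MvPolynomial ι R →ₐ[R] (MvPolynomial ι R)[X] :=
  MvPolynomial.aeval fun i => C (MvPolynomial.X i) + C (MvPolynomial.C (v i)) * X

theorem translateAlong_X (v : ι → R) (i : ι) : translateAlong v (MvPolynomial.X i) =
    C (MvPolynomial.X i) + C (MvPolynomial.C (v i)) * X :=
  MvPolynomial.aeval_X _ i

theorem translateAlong_injective (v : ι → R) : Function.Injective (translateAlong v) := by
  have eval_zero_comp : ((aeval (0 : MvPolynomial ι R)).restrictScalars R).comp
      (translateAlong v) = AlgHom.id R _ :=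
    MvPolynomial.algHom_ext fun i => by simp [translateAlong_X]
  exact Function.LeftInverse.injective (AlgHom.congr_fun eval_zero_comp)

theorem translateAlong_eq_C {v : ι → R} {p : MvPolynomial ι R} (hp : ∀ i ∈ p.vars, v i = 0) :
    translateAlong v p = C p := by
  have := MvPolynomial.hom_congr_vars (f₁ := (translateAlong v).toRingHom) (f₂ := C) (p₁ := p)
    (p₂ := p) (RingHom.ext fun c => (translateAlong v).commutes c)
    (fun i hi _ => by simp [translateAlong_X, hp i hi]) rfl
  simpa using this

theorem translateAlong_monomial (v : ι → R) (m : ι →₀ ℕ) (c : R) :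
    translateAlong v (MvPolynomial.monomial m c) =
      C (MvPolynomial.C c) * m.prod fun i e => translateAlong v (MvPolynomial.X i) ^ e := by
  rw [MvPolynomial.monomial_eq, map_mul, Finsupp.prod, Finsupp.prod, map_prod]
  simp only [map_pow]
  exact congrArg (· * _) ((translateAlong v).commutes c)

variable [DecidableEq R]

theorem natDegree_translateAlong_X (v : ι → R) (i : ι) :
    (translateAlong v (MvPolynomial.X i)).natDegree = if v i = 0 then 0 else 1 := by
  rw [translateAlong_X]
  split_ifs with h
  · simp [h]
  · rw [natDegree_C_add, natDegree_C_mul_X]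
    simpa using h

theorem leadingCoeff_translateAlong_X (v : ι → R) (i : ι) :
    (translateAlong v (MvPolynomial.X i)).leadingCoeff =
      if v i = 0 then MvPolynomial.X i else MvPolynomial.C (v i) := by
  rw [leadingCoeff, natDegree_translateAlong_X, translateAlong_X]
  split_ifs with h <;> simp [h]

variable [IsDomain R]

theorem natDegree_translateAlong_monomial (v : ι → R) (m : ι →₀ ℕ) {c : R} (hc : c ≠ 0) :
    (translateAlong v (MvPolynomial.monomial m c)).natDegree =
      (m.filter fun i => v i ≠ 0).degree := by
  have X_ne_zero (i : ι) : translateAlong v (MvPolynomial.X i) ≠ 0 :=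
    (map_ne_zero_iff _ (translateAlong_injective v)).mpr (MvPolynomial.X_ne_zero i)
  rw [translateAlong_monomial, natDegree_C_mul (by simpa using hc), Finsupp.prod,
    natDegree_prod _ _ fun i _ => pow_ne_zero _ (X_ne_zero i), Finsupp.degree_apply,
    Finsupp.support_filter, Finset.sum_filter]
  refine Finset.sum_congr rfl fun i _ => ?_
  rw [natDegree_pow, natDegree_translateAlong_X]
  by_cases h : v i = 0 <;> simp [h]

theorem leadingCoeff_translateAlong_monomial (v : ι → R) (m : ι →₀ ℕ) (c : R) :
    (translateAlong v (MvPolynomial.monomial m c)).leadingCoeff =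
      MvPolynomial.monomial (m.filter fun i => v i = 0)
        (c * (m.filter fun i => v i ≠ 0).prod fun i e => v i ^ e) := by
  rw [translateAlong_monomial, leadingCoeff_mul, leadingCoeff_C, Finsupp.prod, leadingCoeff_prod,
    MvPolynomial.monomial_eq, map_mul, mul_assoc]
  congr 1
  simp only [leadingCoeff_pow, leadingCoeff_translateAlong_X, Finsupp.prod, Finsupp.support_filter,
    map_prod, Finset.prod_filter, ← Finset.prod_mul_distrib]
  refine Finset.prod_congr rfl fun i _ => ?_
  by_cases h : v i = 0 <;> simp [h]

theorem natDegree_translateAlong_le {v : ι → R} {κ : ι →₀ ℕ} {p : MvPolynomial ι R}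
    (hp : ∀ m ∈ p.support, m ≤ κ) :
    (translateAlong v p).natDegree ≤ (κ.filter fun i => v i ≠ 0).degree := by
  rw [p.as_sum, map_sum]
  refine natDegree_sum_le_of_forall_le _ _ fun m hm => ?_
  rw [natDegree_translateAlong_monomial v m (MvPolynomial.mem_support_iff.mp hm)]
  exact Finsupp.degree_mono (filter_le_filter_of_le _ (hp m hm))

theorem coeff_coeff_translateAlong_monomial_of_ne (v : ι → R) {m κ : ι →₀ ℕ} (hm : m ≤ κ)
    (hne : m ≠ κ) (c : R) :
    ((translateAlong v (MvPolynomial.monomial m c)).coeff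
      (κ.filter fun i => v i ≠ 0).degree).coeff (κ.filter fun i => v i = 0) = 0 := by
  classical
  obtain rfl | hc := eq_or_ne c 0
  · simp
  have natDegree_eq := natDegree_translateAlong_monomial v m hc
  obtain hlt | heq :=
    (Finsupp.degree_mono (filter_le_filter_of_le (fun i => v i ≠ 0) hm)).lt_or_eq
  · rw [coeff_eq_zero_of_natDegree_lt (natDegree_eq.trans_lt hlt), MvPolynomial.coeff_zero]
  · rw [← heq, ← natDegree_eq, coeff_natDegree, leadingCoeff_translateAlong_monomial,
      MvPolynomial.coeff_monomial, if_neg]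
    intro hfilter
    apply hne
    rw [← m.filter_add_filter_not fun i => v i = 0, hfilter,
      eq_of_le_of_degree_eq (filter_le_filter_of_le _ hm) heq, Finsupp.filter_add_filter_not]

theorem coeff_coeff_translateAlong (v : ι → R) {κ : ι →₀ ℕ} {p : MvPolynomial ι R}
    (hp : ∀ m ∈ p.support, m ≤ κ) (hκ : p.coeff κ ≠ 0) :
    ((translateAlong v p).coeff (κ.filter fun i => v i ≠ 0).degree).coeff
        (κ.filter fun i => v i = 0) =
      p.coeff κ * (κ.filter fun i => v i ≠ 0).prod fun i e => v i ^ e := by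
  classical
  nth_rw 1 [p.as_sum]
  rw [map_sum, finsetSum_coeff, MvPolynomial.coeff_sum, Finset.sum_eq_single_of_mem κ
    (MvPolynomial.mem_support_iff.mpr hκ) fun m hm hne =>
      coeff_coeff_translateAlong_monomial_of_ne v (hp m hm) hne _,
    ← natDegree_translateAlong_monomial v κ hκ, coeff_natDegree,
    leadingCoeff_translateAlong_monomial, MvPolynomial.coeff_monomial, if_pos rfl]

theorem coeff_translateAlong_ne_zero (v : ι → R) {κ : ι →₀ ℕ} {p : MvPolynomial ι R}
    (hp : ∀ m ∈ p.support, m ≤ κ) (hκ : p.coeff κ ≠ 0) :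
    (translateAlong v p).coeff (κ.filter fun i => v i ≠ 0).degree ≠ 0 := by
  intro h
  have h_coeff := coeff_coeff_translateAlong v hp hκ
  rw [h, MvPolynomial.coeff_zero] at h_coeff
  refine mul_ne_zero hκ (Finset.prod_ne_zero_iff.mpr fun i hi => pow_ne_zero _ ?_) h_coeff.symm
  rw [Finsupp.support_filter, Finset.mem_filter] at hi
  exact hi.2

end Translate

section LinearSubstitution

open scoped Matrix

variable {n : ℕ}

theorem lsubMv_C (σ : Matrix (Fin n) (Fin n) ℚ) (c : ℚ) :
    lsubMv σ (MvPolynomial.C c) = MvPolynomial.C c :=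
  MvPolynomial.aeval_C _ c

theorem lsubMv_X (σ : Matrix (Fin n) (Fin n) ℚ) (i : Fin n) :
    lsubMv σ (MvPolynomial.X i) = ∑ j, MvPolynomial.C (σ i j) * MvPolynomial.X j :=
  MvPolynomial.aeval_X _ i

theorem lsubMv_one : lsubMv (1 : Matrix (Fin n) (Fin n) ℚ) = RingHom.id _ :=
  MvPolynomial.ringHom_ext (lsubMv_C 1) fun i => by
    simp [lsubMv_X, Matrix.one_apply, Finset.sum_ite_eq]

theorem lsubMv_comp_lsubMv (σ τ : Matrix (Fin n) (Fin n) ℚ) :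
    (lsubMv τ).comp (lsubMv σ) = lsubMv (σ * τ) :=
  MvPolynomial.ringHom_ext (fun c => by simp only [RingHom.comp_apply, lsubMv_C]) fun i => by
    simp only [RingHom.comp_apply, lsubMv_X, map_sum, map_mul, lsubMv_C, Matrix.mul_apply,
      Finset.mul_sum, Finset.sum_mul, mul_assoc]
    exact Finset.sum_comm

theorem lsubMv_injective {σ : Matrix (Fin n) (Fin n) ℚ} (hσ : IsUnit σ.det) :
    Function.Injective (lsubMv σ) := by
  have left_inv : (lsubMv σ⁻¹).comp (lsubMv σ) = RingHom.id _ := by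
    rw [lsubMv_comp_lsubMv, Matrix.mul_nonsing_inv σ hσ, lsubMv_one]
  exact Function.LeftInverse.injective (g := lsubMv σ⁻¹) (RingHom.congr_fun left_inv)

theorem translateAlong_lsubMv (σ : Matrix (Fin n) (Fin n) ℚ) (v : Fin n → ℚ)
    (p : MvPolynomial (Fin n) ℚ) :
    translateAlong v (lsubMv σ p) = (translateAlong (σ *ᵥ v) p).map (lsubMv σ) := by
  have translateAlong_C (v : Fin n → ℚ) (c : ℚ) :
      translateAlong v (MvPolynomial.C c) = C (MvPolynomial.C c) :=
    (translateAlong v).commutes c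
  refine RingHom.congr_fun (f := (translateAlong v : _ →+* _).comp (lsubMv σ))
    (g := (mapRingHom (lsubMv σ)).comp (translateAlong (σ *ᵥ v) : _ →+* _))
    (MvPolynomial.ringHom_ext (fun c => ?_) fun i => ?_) p
  · simp [lsubMv_C, translateAlong_C]
  · simp [lsubMv_X, lsubMv_C, translateAlong_C, translateAlong_X, mul_add, Finset.sum_add_distrib,
      Matrix.mulVec, dotProduct, Finset.sum_mul, Polynomial.map_sum, mul_assoc]

end LinearSubstitution

section LineEmbedding

variable {ι k : Type*} [Field k]

/-- The embedding of `k(Xᵢ : i ∈ ι)` into Laurent series in `t` over itself which substitutes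
`X + t⁻¹ v` for `X`: expansion at the point at infinity of the generic line in direction `v`. -/
def lineEmbedding (v : ι → k) : FractionRing (MvPolynomial ι k) →+*
    LaurentField (FractionRing (MvPolynomial ι k)) :=
  IsFractionRing.lift (A := MvPolynomial ι k)
    (g := ((expandAtInfinity (FractionRing (MvPolynomial ι k))).toRingHom.comp
      (mapRingHom (algebraMap _ _))).comp (translateAlong v).toRingHom)
    (((expandAtInfinity_injective _).comp
      (map_injective _ (IsFractionRing.injective _ _))).comp (translateAlong_injective v))

theorem lineEmbedding_algebraMap (v : ι → k) (p : MvPolynomial ι k) :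
    lineEmbedding v (algebraMap _ _ p) =
      expandAtInfinity _ ((translateAlong v p).map (algebraMap _ _)) :=
  IsFractionRing.lift_algebraMap _ p

theorem lineEmbedding_algebraMap_of_forall_vars {v : ι → k} {p : MvPolynomial ι k}
    (hp : ∀ i ∈ p.vars, v i = 0) :
    lineEmbedding v (algebraMap _ _ p) =
      algebraMap (FractionRing (MvPolynomial ι k)) _ (algebraMap _ _ p) := by
  rw [lineEmbedding_algebraMap, translateAlong_eq_C hp, map_C, expandAtInfinity, aeval_C]

end LineEmbedding

section Coefficients

variable {n : ℕ} {R S : Type*} [CommSemiring R] [CommSemiring S]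

theorem degX_le_iff {F : (MvPolynomial (Fin n) R)[X]} {i : Fin n} {b : ℕ} :
    degX F i ≤ b ↔ ∀ j, (F.coeff j).degreeOf i ≤ b := by
  refine Finset.sup_le_iff.trans ⟨fun h j => ?_, fun h j _ => h j⟩
  by_cases hj : j ∈ F.support
  · exact h j hj
  · simp [notMem_support_iff.mp hj]

theorem forall_degX_le_iff {F : (MvPolynomial (Fin n) R)[X]}
    {κ : Fin n →₀ ℕ} :
    (∀ i, degX F i ≤ κ i) ↔ ∀ j, ∀ m ∈ (F.coeff j).support, m ≤ κ := by
  simp only [degX_le_iff, MvPolynomial.degreeOf_le_iff]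
  exact ⟨fun h j m hm i => h i j m hm, fun h i j m hm => h j m hm i⟩

theorem polyNorm_le_iff {F : (MvPolynomial (Fin n) ℤ)[X]} {B : ℕ} :
    polyNorm F ≤ B ↔ ∀ j m, ((F.coeff j).coeff m).natAbs ≤ B := by
  simp only [polyNorm, mvNorm, Finset.sup_le_iff]
  refine ⟨fun h j m => ?_, fun h j _ m _ => h j m⟩
  by_cases hm : (F.coeff j).coeff m = 0
  · simp [hm]
  · have coeff_ne_zero : F.coeff j ≠ 0 := fun hj => hm (by rw [hj, MvPolynomial.coeff_zero])
    exact h j (mem_support_iff.mpr coeff_ne_zero) m (MvPolynomial.mem_support_iff.mpr hm)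

theorem support_coeff_map_le (f : R →+* S) {F : (MvPolynomial (Fin n) R)[X]}
    {κ : Fin n →₀ ℕ} (hsupp : ∀ j, ∀ m ∈ (F.coeff j).support, m ≤ κ) (j : ℕ) :
    ∀ m ∈ ((F.map (MvPolynomial.map f)).coeff j).support, m ≤ κ := fun m hm => by
  rw [coeff_map] at hm
  exact hsupp j m (MvPolynomial.support_map_subset _ _ hm)

theorem coeff_coeff_map_ne_zero {f : R →+* S}
    (hf : Function.Injective f) {F : (MvPolynomial (Fin n) R)[X]} {j : ℕ} {m : Fin n →₀ ℕ}
    (h : (F.coeff j).coeff m ≠ 0) : ((F.map (MvPolynomial.map f)).coeff j).coeff m ≠ 0 := by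
  rw [coeff_map, MvPolynomial.coeff_map]
  exact (map_ne_zero_iff f hf).mpr h

end Coefficients

section StronglyGenuine

open scoped Matrix

variable {n : ℕ}

theorem exists_eval₂_lineEmbedding_eq_zero {F : (MvPolynomial (Fin n) ℚ)[X]} (hF : F.Monic)
    {d : ℕ} (hd : F.natDegree = d + 1) {κ : Fin n →₀ ℕ} (hκ : ∀ i, 0 < κ i)
    (hsupp : ∀ j, ∀ m ∈ (F.coeff j).support, m ≤ κ) (hcoeff : (F.coeff d).coeff κ ≠ 0)
    {σ : Matrix (Fin n) (Fin n) ℚ} (hσ : IsUnit σ.det) {v : Fin n → ℚ} (hv : v ≠ 0) :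
    ∃ y, (toFracQ (applyGL σ F)).eval₂ (lineEmbedding v) y = 0 := by
  let φ : MvPolynomial (Fin n) ℚ →+* RF n := (algebraMap _ _).comp (lsubMv σ)
  have φ_injective : Function.Injective φ :=
    (IsFractionRing.injective _ _).comp (lsubMv_injective hσ)
  set w := σ *ᵥ v
  let f : (RF n)[X][X] := F.map ((mapRingHom φ).comp (translateAlong w : _ →+* _))
  obtain ⟨i, hi⟩ : ∃ i, w i ≠ 0 := Function.ne_iff.mp <|
    (map_ne_zero_iff (Matrix.mulVecLin σ) (Matrix.mulVec_injective_of_isUnit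
      ((Matrix.isUnit_iff_isUnit_det σ).mpr hσ))).mpr hv
  have N_pos : 0 < (κ.filter fun i => w i ≠ 0).degree := by
    refine Nat.pos_of_ne_zero fun h => (hκ i).ne' ?_
    simpa [hi] using DFunLike.congr_fun ((Finsupp.degree_eq_zero_iff _).mp h) i
  obtain ⟨y, hy⟩ := exists_root_at_infinity (f := f) (hF.map _) (d := d)
    ((hF.natDegree_map _).trans hd) N_pos
    (fun j => by
      rw [coeff_map]
      exact natDegree_map_le.trans (natDegree_translateAlong_le (hsupp j)))
    (by
      rw [coeff_map, RingHom.comp_apply, coe_mapRingHom, coeff_map]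
      exact (map_ne_zero_iff _ φ_injective).mpr (coeff_translateAlong_ne_zero w (hsupp d) hcoeff))
  refine ⟨y, ?_⟩
  rw [toFracQ, applyGL, Polynomial.map_map, eval₂_map]
  rw [eval₂_map] at hy
  convert hy using 2
  refine RingHom.ext fun p => ?_
  simp only [RingHom.comp_apply, lineEmbedding_algebraMap, translateAlong_lsubMv,
    Polynomial.map_map]
  rfl

theorem stronglyGenuineExtOfQ_applyGL {F : (MvPolynomial (Fin n) ℚ)[X]} (hF : F.Monic) {d : ℕ}
    (hd : F.natDegree = d + 1) {κ : Fin n →₀ ℕ} (hκ : ∀ i, 0 < κ i)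
    (hsupp : ∀ j, ∀ m ∈ (F.coeff j).support, m ≤ κ) (hcoeff : (F.coeff d).coeff κ ≠ 0)
    {σ : Matrix (Fin n) (Fin n) ℚ} (hσ : IsUnit σ.det) : StronglyGenuineExtOfQ (applyGL σ F) := by
  rintro M _ _ ⟨eM⟩ M' hM' G hG ⟨eG⟩
  refine ⟨hG.natDegree_pos.trans_le (natDegree_map_le.trans natDegree_map_le), fun i =>
    Nat.pos_of_ne_zero fun hGi => hM' ?_⟩
  let v : Fin n → ℚ := Pi.single i 1
  obtain ⟨y, hy⟩ := exists_eval₂_lineEmbedding_eq_zero hF hd hκ hsupp hcoeff hσ (v := v)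
    (by simp [v])
  let Ψ : M →+* LaurentField (RF n) :=
    (AdjoinRoot.lift (lineEmbedding v) y hy).comp (eM.symm : M →+* _)
  refine intermediateField_eq_bot_of_adjoinRoot_equiv (algebraicClosure_laurentField _) hG eG Ψ ?_
  have Ψ_comp : Ψ.comp (algebraMap (RF n) M) = lineEmbedding v := by
    ext1 x
    simp [Ψ, AdjoinRoot.algebraMap_eq]
  rw [Ψ_comp]
  ext1 j
  simp only [toFrac, toFracQ, toQ, coeff_map]
  refine lineEmbedding_algebraMap_of_forall_vars fun l hl => ?_
  have degreeOf_eq_zero : (G.coeff j).degreeOf i = 0 := Nat.le_zero.mp (degX_le_iff.mp hGi.le j)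
  refine Pi.single_eq_of_ne ?_ 1
  rintro rfl
  exact MvPolynomial.mem_vars_iff_degreeOf_ne_zero.mp (MvPolynomial.vars_map _ _ hl)
    degreeOf_eq_zero

end StronglyGenuine

section Irreducibility

open Polynomial.Bivariate (swap)

theorem coeff_coeff_swap {R : Type*} [CommSemiring R] (f : R[X][X]) (i j : ℕ) :
    ((swap f).coeff i).coeff j = (f.coeff j).coeff i := by
  induction f using Polynomial.induction_on' with
  | add p q hp hq => simp only [map_add, coeff_add, hp, hq]
  | monomial a p =>
    induction p using Polynomial.induction_on' with
    | add p q hp hq => simp only [map_add, coeff_add, hp, hq]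
    | monomial b r =>
      rw [Bivariate.swap_monomial_monomial]
      by_cases hi : b = i <;> by_cases hj : a = j <;> simp [hi, hj, coeff_monomial]

theorem isPrimitive_of_isCoprime_coeff {R : Type*} [CommSemiring R] {p : R[X]} {i j : ℕ}
    (h : IsCoprime (p.coeff i) (p.coeff j)) : p.IsPrimitive := fun _ hr =>
  h.isUnit_of_dvd' ((C_dvd_iff_dvd_coeff _ _).mp hr i) ((C_dvd_iff_dvd_coeff _ _).mp hr j)

variable {R : Type*} [CommRing R]

theorem natDegree_leadingCoeff_swap_lt {g : R[X][X]} (hg : g.Monic)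
    (hdeg : (swap g).natDegree ≠ 0) : (swap g).leadingCoeff.natDegree < g.natDegree := by
  rw [natDegree_lt_iff_degree_lt fun h => hdeg <| by
    rw [leadingCoeff_eq_zero.mp h, natDegree_zero], degree_lt_iff_coeff_zero]
  intro j hj
  rw [leadingCoeff, coeff_coeff_swap]
  obtain rfl | hlt := hj.eq_or_lt
  · rw [hg.coeff_natDegree, coeff_one, if_neg hdeg]
  · rw [coeff_eq_zero_of_natDegree_lt hlt, coeff_zero]

theorem natDegree_swap_ne_zero_of_dvd_isPrimitive [IsDomain R] {f g : R[X][X]}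
    (hg : g.natDegree ≠ 0) (hf : (swap f).IsPrimitive) (hgf : g ∣ f) : (swap g).natDegree ≠ 0 := by
  intro h
  obtain ⟨q, hq⟩ := natDegree_eq_zero.mp h
  obtain ⟨r, rfl⟩ := hgf
  have isUnit_q : IsUnit q := hf q ⟨swap r, by rw [hq, map_mul]⟩
  refine hg (Nat.le_zero.mp (natDegree_le_iff_coeff_eq_zero.mpr fun j hj => ?_))
  ext i
  rw [← coeff_coeff_swap, ← hq, coeff_zero, coeff_C]
  split_ifs
  · exact coeff_eq_zero_of_natDegree_lt ((natDegree_eq_zero_of_isUnit isUnit_q).trans_lt hj)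
  · exact coeff_zero j

theorem irreducible_of_isPrimitive_swap [IsDomain R] {f : R[X][X]} (hf : f.Monic)
    (hprim : (swap f).IsPrimitive) (hdeg : (swap f).leadingCoeff.natDegree + 1 = f.natDegree) :
    Irreducible f := by
  refine (hf.irreducible_iff_natDegree).mpr ⟨?_, fun g h hg hh hgh => ?_⟩
  · rintro rfl
    simp at hdeg
  by_contra! hne
  -- Each factor loses a degree in `Y` on passing to its leading coefficient in the other variable,
  -- whereas `f` loses only one.
  have hg' := natDegree_leadingCoeff_swap_lt hg
    (natDegree_swap_ne_zero_of_dvd_isPrimitive hne.1 hprim (hgh ▸ dvd_mul_right g h))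
  have hh' := natDegree_leadingCoeff_swap_lt hh
    (natDegree_swap_ne_zero_of_dvd_isPrimitive hne.2 hprim (hgh ▸ dvd_mul_left h g))
  have hfgh : (swap f).leadingCoeff.natDegree ≤
      (swap g).leadingCoeff.natDegree + (swap h).leadingCoeff.natDegree := by
    rw [← hgh, map_mul, leadingCoeff_mul]
    exact natDegree_mul_le
  have := hg.natDegree_mul hh
  rw [hgh] at this
  omega

end Irreducibility

section Diagonal

open Polynomial.Bivariate (swap)

variable {ι R : Type*} [CommRing R]

theorem coeff_aeval_X (p : MvPolynomial ι R) (e : ℕ) :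
    (MvPolynomial.aeval (fun _ : ι => (X : R[X])) p).coeff e =
      ∑ m ∈ p.support with m.degree = e, p.coeff m := by
  nth_rw 1 [p.as_sum]
  simp only [map_sum, finsetSum_coeff, MvPolynomial.aeval_monomial, algebraMap_eq,
    coeff_C_mul, Finsupp.prod, Finset.prod_pow_eq_pow_sum, ← Finsupp.degree_apply, coeff_X_pow,
    mul_ite, mul_one, mul_zero, Finset.sum_filter, eq_comm]

/-- The diagonal specialization `F(Y, x, …, x)` of `F(Y, X)`, as a polynomial in `x` with
coefficients in `R[Y]`. -/
def diagonal : (MvPolynomial ι R)[X] →+* R[X][X] :=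
  (swap (R := R)).toRingHom.comp
    (mapRingHom (MvPolynomial.aeval fun _ : ι => (X : R[X])).toRingHom)

theorem coeff_coeff_diagonal (F : (MvPolynomial ι R)[X]) (e j : ℕ) :
    ((diagonal F).coeff e).coeff j =
      ∑ m ∈ (F.coeff j).support with m.degree = e, (F.coeff j).coeff m := by
  rw [← coeff_aeval_X]
  exact (coeff_coeff_swap _ e j).trans (by rw [coe_mapRingHom, coeff_map]; rfl)

theorem diagonal_C_C (a : R) :
    diagonal (C (MvPolynomial.C a) : (MvPolynomial ι R)[X]) = C (C a) := by
  simp [diagonal, Bivariate.swap_C_C]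

theorem coeff_coeff_diagonal_degree {F : (MvPolynomial ι R)[X]} {κ : ι →₀ ℕ}
    (hsupp : ∀ j, ∀ m ∈ (F.coeff j).support, m ≤ κ) (j : ℕ) :
    ((diagonal F).coeff κ.degree).coeff j = (F.coeff j).coeff κ := by
  rw [coeff_coeff_diagonal, Finset.sum_eq_single κ]
  · intro m hm hne
    rw [Finset.mem_filter] at hm
    exact absurd (eq_of_le_of_degree_eq (hsupp j m hm.1) hm.2) hne
  · simp

theorem natDegree_diagonal_le {F : (MvPolynomial ι R)[X]} {κ : ι →₀ ℕ}
    (hsupp : ∀ j, ∀ m ∈ (F.coeff j).support, m ≤ κ) : (diagonal F).natDegree ≤ κ.degree := by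
  refine natDegree_le_iff_coeff_eq_zero.mpr fun e he => Polynomial.ext fun j => ?_
  rw [coeff_coeff_diagonal, coeff_zero, Finset.filter_false_of_mem, Finset.sum_empty]
  exact fun m hm => ((Finsupp.degree_mono (hsupp j m hm)).trans_lt he).ne

theorem natDegree_coeff_diagonal_degree_le {F : (MvPolynomial ι R)[X]} (hF : F.Monic) {d : ℕ}
    (hd : F.natDegree = d + 1) {κ : ι →₀ ℕ} (hκ : κ ≠ 0)
    (hsupp : ∀ j, ∀ m ∈ (F.coeff j).support, m ≤ κ) :
    ((diagonal F).coeff κ.degree).natDegree ≤ d := by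
  classical
  refine natDegree_le_iff_coeff_eq_zero.mpr fun j hj => ?_
  rw [coeff_coeff_diagonal_degree hsupp]
  obtain rfl | hlt := (Nat.succ_le_of_lt hj).eq_or_lt
  · rw [← Nat.add_one, ← hd, hF.coeff_natDegree, MvPolynomial.coeff_one, if_neg hκ.symm]
  · rw [coeff_eq_zero_of_natDegree_lt (hd.trans_lt hlt), MvPolynomial.coeff_zero]

theorem irreducible_of_isCoprime_coeff_diagonal [IsDomain R] {F : (MvPolynomial ι R)[X]}
    (hF : F.Monic) {d : ℕ} (hd : F.natDegree = d + 1) {κ : ι →₀ ℕ} (hκ : κ ≠ 0)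
    (hsupp : ∀ j, ∀ m ∈ (F.coeff j).support, m ≤ κ) (hcoeff : (F.coeff d).coeff κ ≠ 0)
    (hcop : IsCoprime ((diagonal F).coeff 0) ((diagonal F).coeff κ.degree)) : Irreducible F := by
  have coeff_coeff_ne_zero : ((diagonal F).coeff κ.degree).coeff d ≠ 0 := by
    rwa [coeff_coeff_diagonal_degree hsupp]
  have natDegree_diagonal : (diagonal F).natDegree = κ.degree :=
    natDegree_eq_of_le_of_coeff_ne_zero (natDegree_diagonal_le hsupp) fun h =>
      coeff_coeff_ne_zero (by rw [h, coeff_zero])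
  have natDegree_leadingCoeff : (diagonal F).leadingCoeff.natDegree = d := by
    rw [leadingCoeff, natDegree_diagonal]
    exact natDegree_eq_of_le_of_coeff_ne_zero
      (natDegree_coeff_diagonal_degree_le hF hd hκ hsupp) coeff_coeff_ne_zero
  let φ : MvPolynomial ι R →+* R[X] := (MvPolynomial.aeval fun _ => X).toRingHom
  refine hF.irreducible_of_irreducible_map φ F
    (irreducible_of_isPrimitive_swap (hF.map φ) (isPrimitive_of_isCoprime_coeff hcop) ?_)
  rw [hF.natDegree_map, hd]
  exact congrArg (· + 1) natDegree_leadingCoeff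

end Diagonal

section Counting

theorem mul_ncard_le_mul_ncard_of_lines {A G : Type*} [AddGroup A] [AddGroup G] {ℓ : A →+ G}
    (hℓ : Function.Injective ℓ) {S E : Set G} (hS : S.Finite) (hE : E ⊆ S) {N c : ℕ}
    (hN : ∀ F ∈ E, N ≤ {a | F + ℓ a ∈ S}.encard) (hc : ∀ F ∈ S, {a | F + ℓ a ∈ E}.encard ≤ c) :
    N * E.ncard ≤ c * S.ncard := by
  classical
  have translate_injective (F : G) : Function.Injective (F + ℓ ·) :=
    (add_right_injective F).comp hℓ
  have hEfin := hS.subset hE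
  rw [Set.ncard_eq_toFinset_card _ hS, Set.ncard_eq_toFinset_card _ hEfin, mul_comm N, mul_comm c]
  refine Finset.card_mul_le_card_mul (fun F P => ∃ a, F + ℓ a = P) (fun F hF => ?_) fun P hP => ?_
  · have := hN F (hEfin.mem_toFinset.mp hF)
    rw [← (translate_injective F).encard_image] at this
    rw [← Nat.cast_le (α := ℕ∞), ← Set.encard_coe_eq_coe_finsetCard]
    refine this.trans (Set.encard_le_encard ?_)
    rintro _ ⟨a, ha, rfl⟩
    simpa [Finset.mem_bipartiteAbove] using ha
  · have := hc P (hS.mem_toFinset.mp hP)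
    rw [← (translate_injective P).encard_image] at this
    rw [← Nat.cast_le (α := ℕ∞), ← Set.encard_coe_eq_coe_finsetCard]
    refine (Set.encard_le_encard ?_).trans this
    intro F hF
    simp only [Finset.coe_bipartiteBelow, Set.Finite.mem_toFinset, Set.mem_ofPred_eq] at hF
    obtain ⟨hFE, a, rfl⟩ := hF
    exact ⟨-a, by simpa using hFE, by simp⟩

theorem encard_setOf_not_isCoprime_add_C_le {K : Type*} [Field K] [IsAlgClosed K] (p : K[X])
    {q : K[X]} (hq : q ≠ 0) : {a | ¬ IsCoprime (p + C a) q}.encard ≤ q.natDegree := by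
  classical
  have subset_image : {a | ¬ IsCoprime (p + C a) q} ⊆ (fun r => -p.eval r) '' q.roots.toFinset := by
    intro a ha
    rw [Set.mem_ofPred_eq, isCoprime_iff_aeval_ne_zero_of_isAlgClosed K K] at ha
    push Not at ha
    obtain ⟨r, hpr, hqr⟩ := ha
    refine ⟨r, by simpa [hq] using hqr, ?_⟩
    rw [coe_aeval_eq_eval, eval_add, eval_C] at hpr
    exact neg_eq_of_add_eq_zero_right hpr
  refine (Set.encard_le_encard subset_image).trans ((Set.encard_image_le _ _).trans ?_)
  rw [Set.encard_coe_eq_coe_finsetCard, Nat.cast_le]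
  exact (Multiset.toFinset_card_le _).trans (card_roots' q)

/-- The polynomials of height at most `B` in the family `M` of the theorem, where `κ i` bounds the
degree in `Xᵢ`. -/
def coeffBox {n : ℕ} (D : ℕ) (κ : Fin n →₀ ℕ) (B : ℕ) : Set (MvPolynomial (Fin n) ℤ)[X] :=
  {F | F.Monic ∧ F.natDegree = D ∧ (∀ i, degX F i ≤ κ i) ∧ polyNorm F ≤ B}

/-- The line `a ↦ a Y ^ j X ^ m` of polynomials. -/
def monomialLine {ι : Type*} (j : ℕ) (m : ι →₀ ℕ) : ℤ →+ (MvPolynomial ι ℤ)[X] :=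
  (monomial j).toAddMonoidHom.comp (MvPolynomial.monomial m).toAddMonoidHom

theorem coeff_coeff_monomialLine {ι : Type*} [DecidableEq ι] (j i : ℕ) (m l : ι →₀ ℕ) (a : ℤ) :
    ((monomialLine j m a).coeff i).coeff l = if j = i ∧ m = l then a else 0 := by
  by_cases h : j = i <;> simp [monomialLine, coeff_monomial, MvPolynomial.coeff_monomial, h]

theorem monomialLine_injective {ι : Type*} (j : ℕ) (m : ι →₀ ℕ) :
    Function.Injective (monomialLine j m) := fun a b h => by
  classical
  simpa [coeff_coeff_monomialLine] using congr((($h).coeff j).coeff m)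

variable {n D : ℕ} {κ : Fin n →₀ ℕ} {B : ℕ}

theorem mem_coeffBox_iff {F : (MvPolynomial (Fin n) ℤ)[X]} : F ∈ coeffBox D κ B ↔
    F.Monic ∧ F.natDegree = D ∧ (∀ j, ∀ m ∈ (F.coeff j).support, m ≤ κ) ∧
      ∀ j m, ((F.coeff j).coeff m).natAbs ≤ B := by
  rw [coeffBox, Set.mem_ofPred_eq, forall_degX_le_iff, polyNorm_le_iff]

theorem coeffBox_finite : (coeffBox D κ B).Finite := by
  let coeffs (F : (MvPolynomial (Fin n) ℤ)[X]) (j : Fin (D + 1)) (m : Set.Iic κ) : ℤ :=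
    (F.coeff j).coeff m
  have : Finite (Set.Iic κ) := Set.finite_Iic κ
  refine Set.Finite.of_injOn (f := coeffs) (t := Set.univ.pi fun _ => Set.univ.pi fun _ =>
    Set.Icc (-B : ℤ) B) (fun F hF j _ m _ => ?_) (fun F hF G hG hFG => ?_)
    (Set.Finite.pi fun _ => Set.Finite.pi fun _ => Set.finite_Icc _ _)
  · rw [Set.mem_Icc, ← abs_le, Int.abs_eq_natAbs]
    exact Nat.cast_le.mpr ((mem_coeffBox_iff.mp hF).2.2.2 j m)
  · obtain ⟨-, natDegree_F, support_F, -⟩ := mem_coeffBox_iff.mp hF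
    obtain ⟨-, natDegree_G, support_G, -⟩ := mem_coeffBox_iff.mp hG
    refine Polynomial.ext fun j => MvPolynomial.ext _ _ fun m => ?_
    obtain hj | hj := le_or_gt j D
    · by_cases hm : m ≤ κ
      · exact congrFun₂ hFG ⟨j, Nat.lt_succ_of_le hj⟩ ⟨m, hm⟩
      · rw [MvPolynomial.notMem_support_iff.mp (mt (support_F j m) hm),
          MvPolynomial.notMem_support_iff.mp (mt (support_G j m) hm)]
    · rw [coeff_eq_zero_of_natDegree_lt (natDegree_F.trans_lt hj),
        coeff_eq_zero_of_natDegree_lt (natDegree_G.trans_lt hj)]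

theorem add_monomialLine_mem_coeffBox {F : (MvPolynomial (Fin n) ℤ)[X]} (hF : F ∈ coeffBox D κ B)
    {j : ℕ} (hj : j < D) {m : Fin n →₀ ℕ} (hm : m ≤ κ) {a : ℤ}
    (ha : ((F.coeff j).coeff m + a).natAbs ≤ B) : F + monomialLine j m a ∈ coeffBox D κ B := by
  obtain ⟨monic_F, natDegree_F, support_F, height_F⟩ := mem_coeffBox_iff.mp hF
  have degree_lt : (monomialLine j m a).degree < F.degree := by
    rw [degree_eq_natDegree monic_F.ne_zero, natDegree_F]
    exact (degree_monomial_le j _).trans_lt (Nat.cast_lt.mpr hj)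
  have coeff_eq (i : ℕ) (l : Fin n →₀ ℕ) : ((F + monomialLine j m a).coeff i).coeff l =
      (F.coeff i).coeff l + if j = i ∧ m = l then a else 0 := by
    rw [coeff_add, MvPolynomial.coeff_add, coeff_coeff_monomialLine]
  refine mem_coeffBox_iff.mpr ⟨monic_F.add_of_left degree_lt,
    (natDegree_add_eq_left_of_degree_lt degree_lt).trans natDegree_F,
    fun i l hl => ?_, fun i l => ?_⟩
  · rw [MvPolynomial.mem_support_iff, coeff_eq] at hl
    split_ifs at hl with h
    · exact h.2 ▸ hm
    · exact support_F i l (by simpa using hl)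
  · rw [coeff_eq]
    split_ifs with h
    · rwa [← h.1, ← h.2]
    · simpa using height_F i l

theorem le_encard_add_monomialLine_mem_coeffBox {F : (MvPolynomial (Fin n) ℤ)[X]}
    (hF : F ∈ coeffBox D κ B) {j : ℕ} (hj : j < D) {m : Fin n →₀ ℕ} (hm : m ≤ κ) :
    ((2 * B + 1 : ℕ) : ℕ∞) ≤ {a | F + monomialLine j m a ∈ coeffBox D κ B}.encard := by
  set c := (F.coeff j).coeff m
  have card_Icc : (Set.Icc (-B - c) (B - c)).encard = (2 * B + 1 : ℕ) := by
    rw [← Finset.coe_Icc, Set.encard_coe_eq_coe_finsetCard, Int.card_Icc]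
    congr 1
    omega
  rw [← card_Icc]
  refine Set.encard_le_encard fun a ha => add_monomialLine_mem_coeffBox hF hj hm ?_
  rw [Set.mem_Icc] at ha
  omega

theorem mul_ncard_le_mul_ncard_coeffBox {E : Set (MvPolynomial (Fin n) ℤ)[X]}
    (hE : E ⊆ coeffBox D κ B) {j : ℕ} (hj : j < D) {m : Fin n →₀ ℕ} (hm : m ≤ κ) {c : ℕ}
    (hc : ∀ F ∈ coeffBox D κ B, {a | F + monomialLine j m a ∈ E}.encard ≤ c) :
    (2 * B + 1) * E.ncard ≤ c * (coeffBox D κ B).ncard :=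
  mul_ncard_le_mul_ncard_of_lines (monomialLine_injective j m) coeffBox_finite hE
    (fun _ hF => le_encard_add_monomialLine_mem_coeffBox (hE hF) hj hm) hc

theorem mul_ncard_coeff_eq_zero_le {d : ℕ} :
    (2 * B + 1) * {F ∈ coeffBox (d + 1) κ B | (F.coeff d).coeff κ = 0}.ncard ≤
      (coeffBox (d + 1) κ B).ncard := by
  refine (mul_ncard_le_mul_ncard_coeffBox (Set.sep_subset _ _) d.lt_succ_self le_rfl (c := 1)
    fun F _ => ?_).trans_eq (one_mul _)
  rw [Nat.cast_one, Set.encard_le_one_iff]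
  have eq_neg (a : ℤ) (ha : ((F + monomialLine d κ a).coeff d).coeff κ = 0) :
      a = -(F.coeff d).coeff κ := by
    rw [coeff_add, MvPolynomial.coeff_add, coeff_coeff_monomialLine, if_pos ⟨rfl, rfl⟩] at ha
    exact eq_neg_of_add_eq_zero_right ha
  exact fun a b ha hb => (eq_neg a ha.2).trans (eq_neg b hb.2).symm

end Counting

section CoprimeExtremes

variable {n : ℕ} {κ : Fin n →₀ ℕ} {B d : ℕ}

/-- Base change to `ℚ̄[Y,X₁,…,Xₙ]`. -/
abbrev toQbar (F : (MvPolynomial (Fin n) ℤ)[X]) : (MvPolynomial (Fin n) (AlgebraicClosure ℚ))[X] :=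
  F.map (MvPolynomial.map (Int.castRingHom (AlgebraicClosure ℚ)))

theorem toQbar_add_monomialLine_zero (F : (MvPolynomial (Fin n) ℤ)[X]) (a : ℤ) :
    toQbar (F + monomialLine 0 0 a) = toQbar F + C (MvPolynomial.C (a : AlgebraicClosure ℚ)) := by
  simp [toQbar, monomialLine]

/-- The lowest and the highest coefficient of `F(Y, x, …, x)` with respect to `x` have no common
root in `ℚ̄`; the highest is the one of degree `∑ i, κ i`. -/
def HasCoprimeExtremes (κ : Fin n →₀ ℕ) (F : (MvPolynomial (Fin n) ℤ)[X]) : Prop :=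
  IsCoprime ((diagonal (toQbar F)).coeff 0) ((diagonal (toQbar F)).coeff κ.degree)

theorem hasCoprimeExtremes_add_monomialLine_iff (hκ : κ ≠ 0) (F : (MvPolynomial (Fin n) ℤ)[X])
    (a : ℤ) : HasCoprimeExtremes κ (F + monomialLine 0 0 a) ↔
      IsCoprime ((diagonal (toQbar F)).coeff 0 + C (a : AlgebraicClosure ℚ))
        ((diagonal (toQbar F)).coeff κ.degree) := by
  have degree_ne_zero : κ.degree ≠ 0 := mt (Finsupp.degree_eq_zero_iff κ).mp hκ
  rw [HasCoprimeExtremes, toQbar_add_monomialLine_zero, map_add, diagonal_C_C, coeff_add,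
    coeff_C_zero, coeff_add, coeff_C_of_ne_zero degree_ne_zero, add_zero]

theorem encard_setOf_not_hasCoprimeExtremes_le {F : (MvPolynomial (Fin n) ℤ)[X]}
    (hF : F ∈ coeffBox (d + 1) κ B) (hκ : κ ≠ 0) (hcoeff : (F.coeff d).coeff κ ≠ 0) :
    {a | ¬ HasCoprimeExtremes κ (F + monomialLine 0 0 a)}.encard ≤ d := by
  obtain ⟨monic_F, natDegree_F, support_F, -⟩ := mem_coeffBox_iff.mp hF
  set q := (diagonal (toQbar F)).coeff κ.degree
  have coeff_q : q.coeff d = ((toQbar F).coeff d).coeff κ :=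
    coeff_coeff_diagonal_degree (support_coeff_map_le _ support_F) d
  have q_ne_zero : q ≠ 0 := fun h => coeff_coeff_map_ne_zero (RingHom.injective_int _) hcoeff <| by
    rw [← coeff_q, h, coeff_zero]
  have natDegree_q : q.natDegree ≤ d := natDegree_coeff_diagonal_degree_le (monic_F.map _)
    ((monic_F.natDegree_map _).trans natDegree_F) hκ (support_coeff_map_le _ support_F)
  simp only [hasCoprimeExtremes_add_monomialLine_iff hκ]
  rw [← (Int.cast_injective (α := AlgebraicClosure ℚ)).encard_image]
  refine (Set.encard_le_encard ?_).trans
    ((encard_setOf_not_isCoprime_add_C_le ((diagonal (toQbar F)).coeff 0) q_ne_zero).trans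
      (Nat.cast_le.mpr natDegree_q))
  rintro _ ⟨a, ha, rfl⟩
  exact ha

theorem mul_ncard_not_hasCoprimeExtremes_le (hκ : κ ≠ 0) :
    (2 * B + 1) * {F ∈ coeffBox (d + 1) κ B |
        (F.coeff d).coeff κ ≠ 0 ∧ ¬ HasCoprimeExtremes κ F}.ncard ≤
      d * (coeffBox (d + 1) κ B).ncard := by
  refine mul_ncard_le_mul_ncard_coeffBox (Set.sep_subset _ _) d.succ_pos (zero_le (a := κ))
    fun F hF => ?_
  have coeff_eq (a : ℤ) : ((F + monomialLine 0 0 a).coeff d).coeff κ = (F.coeff d).coeff κ := by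
    rw [coeff_add, MvPolynomial.coeff_add, coeff_coeff_monomialLine, if_neg fun h => hκ h.2.symm,
      add_zero]
  by_cases hcoeff : (F.coeff d).coeff κ = 0
  · refine (Set.encard_eq_zero.mpr (Set.eq_empty_of_forall_notMem fun a ha => ?_)).trans_le zero_le
    exact ha.2.1 ((coeff_eq a).trans hcoeff)
  · exact (Set.encard_le_encard fun a ha => ha.2.2).trans
      (encard_setOf_not_hasCoprimeExtremes_le hF hκ hcoeff)


theorem isStronglyAllowable_of_hasCoprimeExtremes {F : (MvPolynomial (Fin n) ℤ)[X]}
    (hF : F ∈ coeffBox (d + 1) κ B) (hn : 0 < n) (hκ : ∀ i, 0 < κ i)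
    (hcoeff : (F.coeff d).coeff κ ≠ 0) (hcop : HasCoprimeExtremes κ F) :
    IsStronglyAllowable F := by
  obtain ⟨monic_F, natDegree_F, support_F, -⟩ := mem_coeffBox_iff.mp hF
  have κ_ne_zero : κ ≠ 0 := fun h => (hκ ⟨0, hn⟩).ne' (by simp [h])
  refine ⟨?_, monic_F, fun σ hσ => ?_⟩
  · exact irreducible_of_isCoprime_coeff_diagonal (monic_F.map _)
      ((monic_F.natDegree_map _).trans natDegree_F) κ_ne_zero (support_coeff_map_le _ support_F)
      (coeff_coeff_map_ne_zero (RingHom.injective_int _) hcoeff) hcop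
  · exact stronglyGenuineExtOfQ_applyGL (monic_F.map _)
      ((monic_F.natDegree_map _).trans natDegree_F) hκ (support_coeff_map_le _ support_F)
      (coeff_coeff_map_ne_zero (RingHom.injective_int _) hcoeff) hσ

theorem mul_ncard_not_isStronglyAllowable_le (hn : 0 < n) (hκ : ∀ i, 0 < κ i) :
    (2 * B + 1) * {F ∈ coeffBox (d + 1) κ B | ¬ IsStronglyAllowable F}.ncard ≤
      (d + 1) * (coeffBox (d + 1) κ B).ncard := by
  set box := coeffBox (d + 1) κ B
  have κ_ne_zero : κ ≠ 0 := fun h => (hκ ⟨0, hn⟩).ne' (by simp [h])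
  have subset_union : {F ∈ box | ¬ IsStronglyAllowable F} ⊆
      {F ∈ box | (F.coeff d).coeff κ = 0} ∪
        {F ∈ box | (F.coeff d).coeff κ ≠ 0 ∧ ¬ HasCoprimeExtremes κ F} := by
    rintro F ⟨hF, hbad⟩
    by_cases hcoeff : (F.coeff d).coeff κ = 0
    · exact .inl ⟨hF, hcoeff⟩
    · exact .inr ⟨hF, hcoeff, fun hcop =>
        hbad (isStronglyAllowable_of_hasCoprimeExtremes hF hn hκ hcoeff hcop)⟩
  have finite_union := (coeffBox_finite (D := d + 1) (κ := κ) (B := B)).subset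
    (Set.union_subset (Set.sep_subset box fun F => (F.coeff d).coeff κ = 0)
      (Set.sep_subset box fun F => (F.coeff d).coeff κ ≠ 0 ∧ ¬ HasCoprimeExtremes κ F))
  calc (2 * B + 1) * {F ∈ box | ¬ IsStronglyAllowable F}.ncard
      ≤ (2 * B + 1) * ({F ∈ box | (F.coeff d).coeff κ = 0}.ncard +
          {F ∈ box | (F.coeff d).coeff κ ≠ 0 ∧ ¬ HasCoprimeExtremes κ F}.ncard) := by
        gcongr
        exact (Set.ncard_le_ncard subset_union finite_union).trans (Set.ncard_union_le _ _)
    _ ≤ box.ncard + d * box.ncard := by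
        rw [mul_add]
        exact add_le_add mul_ncard_coeff_eq_zero_le (mul_ncard_not_hasCoprimeExtremes_le κ_ne_zero)
    _ = (d + 1) * box.ncard := by ring

end CoprimeExtremes

theorem statement8_general (n D : ℕ) (hn : 0 < n) (hD : 0 < D) (k : Fin n → ℕ)
    (hk : ∀ i, 1 ≤ k i) {T : ℝ} (hT : 0 < T) :
    (Set.ncard {F : Polynomial (MvPolynomial (Fin n) ℤ) |
        F.Monic ∧ F.natDegree = D ∧ (∀ i, degX F i ≤ k i) ∧ (polyNorm F : ℝ) ≤ T ∧
        ¬ IsStronglyAllowable F} : ℝ) ≤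
      (D / T) *
        (Set.ncard {F : Polynomial (MvPolynomial (Fin n) ℤ) |
          F.Monic ∧ F.natDegree = D ∧ (∀ i, degX F i ≤ k i) ∧ (polyNorm F : ℝ) ≤ T} : ℝ) := by
  obtain ⟨d, rfl⟩ := Nat.exists_eq_add_one.mpr hD
  let κ : Fin n →₀ ℕ := Finsupp.equivFunOnFinite.symm k
  have norm_le_iff (F : (MvPolynomial (Fin n) ℤ)[X]) : (polyNorm F : ℝ) ≤ T ↔ polyNorm F ≤ ⌊T⌋₊ :=
    (Nat.le_floor_iff hT.le).symm
  have h := mul_ncard_not_isStronglyAllowable_le (d := d) (B := ⌊T⌋₊) (κ := κ) hn hk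
  simp only [coeffBox, Set.mem_ofPred_eq, and_assoc, κ,
    Finsupp.equivFunOnFinite_symm_apply_apply] at h
  simp only [norm_le_iff]
  rw [div_mul_eq_mul_div, le_div_iff₀' hT]
  have T_le : T ≤ (2 * ⌊T⌋₊ + 1 : ℕ) := (Nat.lt_floor_add_one T).le.trans (mod_cast by omega)
  exact (mul_le_mul_of_nonneg_right T_le (Nat.cast_nonneg _)).trans (mod_cast h)

theorem statement8 (n D : ℕ) (hn : 2 ≤ n) (hD : 2 ≤ D) (k : Fin n → ℕ)
    (hk : ∀ i, 1 ≤ k i) :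
    ∃ C : ℝ, 0 < C ∧ ∀ T : ℝ, 1 ≤ T →
      (Set.ncard {F : Polynomial (MvPolynomial (Fin n) ℤ) |
          F.Monic ∧ F.natDegree = D ∧ (∀ i, degX F i ≤ k i) ∧ (polyNorm F : ℝ) ≤ T ∧
          ¬ IsStronglyAllowable F} : ℝ) ≤
        (C / T) *
          (Set.ncard {F : Polynomial (MvPolynomial (Fin n) ℤ) |
            F.Monic ∧ F.natDegree = D ∧ (∀ i, degX F i ≤ k i) ∧ (polyNorm F : ℝ) ≤ T} : ℝ) :=
  ⟨D, by positivity, fun _ hT => statement8_general n D (by omega) (by omega) k hk (by linarith)⟩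
end
end

section
/- Let n ≥ 2 and let F(Y,X₁,…,Xₙ) ∈ ℤ[Y,X₁,…,Xₙ] be an n-genuine polynomial. Then there is a constant C depending only on n and deg F such that for all real B ≥ 1: #{x′ = (x₂,…,xₙ) ∈ ℤ^{n−1} ∩ [−B,B]^{n−1} : F(Y,X₁,x₂,…,xₙ) has a linear factor in Y over ℚ̄} ≤ C · B^{n−2}. -/
open Polynomial

noncomputable section

/-!
The bivariate polynomials `P(Y, X)` of bounded degree that have a root `Y = Q(X)` form, by
Chevalley's theorem, a constructible subset of the space of coefficients: the degree of `Q` is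
bounded, so the equation `P(Q(X), X) = 0` is a finite system for the coefficients of `Q`. View
`F(Y, X₁, x')` as such a polynomial depending on `x' = (x₂, …, xₙ)`. If the generic member of this
family has no root, then its members with a root lie on a hypersurface `h(x') = 0` whose degree is
bounded in terms of `deg F` alone, and Schwartz–Zippel bounds the number of integral points of
`h = 0` in a box.

Suppose the generic member has a root `Q`, and put `k = ℚ(X₂, …, Xₙ)`. The conjugates of `Q` are
roots as well, so the coefficients of `Q` generate an extension `k(α)` of degree at most
`deg_Y F`. Since `Q(X₁)` generates `ℚ(X)[Y]/(F)` and lies in `k(α)(X₁)`, comparing degrees shows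
that `α` generates `ℚ(X)[Y]/(F)`. The minimal polynomial of `α` over `k` does not involve `X₁`, so
`F` is not `n`-genuine.
-/

section ConstructibleSets

theorem exists_finset_separating_of_isConstructible {R : Type*} [CommRing R]
    {U : Set (PrimeSpectrum R)} (hU : Topology.IsConstructible U) :
    ∃ G : Finset R, ∀ p ∉ U, ∃ r ∈ G, r ∉ p.asIdeal ∧ ∀ q ∈ U, p ≤ q → r ∈ q.asIdeal := by
  classical
  obtain ⟨S, rfl⟩ := PrimeSpectrum.exists_constructibleSetData_iff.mpr hU
  clear hU
  unfold PrimeSpectrum.ConstructibleSetData.toSet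
  induction S using Finset.induction_on with
  | empty => exact ⟨{1}, fun p _ ↦ ⟨1, by simp, p.isPrime.one_notMem, by simp⟩⟩
  | insert c S _ ih =>
    obtain ⟨H, hH⟩ := ih
    refine ⟨Finset.image₂ (· * ·) (insert 1 (Finset.univ.image c.g)) H, fun p hp ↦ ?_⟩
    rw [Finset.set_biUnion_insert, Set.mem_union, not_or] at hp
    obtain ⟨s, hs, hsp, hsq⟩ := hH p hp.2
    have hbasic : ∃ r ∈ insert 1 (Finset.univ.image c.g),
        r ∉ p.asIdeal ∧ ∀ q ∈ c.toSet, p ≤ q → r ∈ q.asIdeal := by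
      by_cases hg : Set.range c.g ⊆ p.asIdeal
      · have hf : c.f ∈ p.asIdeal := by
          by_contra hf
          exact hp.1 ⟨hg, by simpa using hf⟩
        exact ⟨1, by simp, p.isPrime.one_notMem,
          fun q hq hpq ↦ absurd (hpq hf) (by simpa using hq.2)⟩
      · obtain ⟨_, ⟨i, rfl⟩, hi⟩ := Set.not_subset.mp hg
        exact ⟨c.g i, by simp, hi, fun q hq _ ↦ hq.1 ⟨i, rfl⟩⟩
    obtain ⟨r, hr, hrp, hrq⟩ := hbasic
    refine ⟨r * s, Finset.mem_image₂_of_mem hr hs,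
      fun h ↦ (p.isPrime.mem_or_mem h).elim hrp hsp, fun q hq hpq ↦ ?_⟩
    rw [Finset.set_biUnion_insert] at hq
    rcases hq with hq | hq
    · exact q.asIdeal.mul_mem_right s (hrq q hq hpq)
    · exact q.asIdeal.mul_mem_left r (hsq q hq hpq)

end ConstructibleSets

section GeometricPoints

open scoped TensorProduct

theorem nonempty_algHom_of_finiteType_of_isAlgClosed (k B K : Type*) [Field k] [CommRing B]
    [Nontrivial B] [Algebra k B] [Algebra.FiniteType k B] [Field K] [IsAlgClosed K] [Algebra k K] :
    Nonempty (B →ₐ[k] K) := by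
  obtain ⟨m, hm⟩ := Ideal.exists_maximal B
  let _ : Field (B ⧸ m) := Ideal.Quotient.field m
  have : Module.Finite k (B ⧸ m) := finite_of_finite_type_of_isJacobsonRing k (B ⧸ m)
  exact ⟨(IsAlgClosed.lift (R := k) (S := B ⧸ m) (M := K)).comp (Ideal.Quotient.mkₐ k m)⟩

variable {R S K : Type*} [CommRing R] [CommRing S] [Algebra R S] [Field K]

theorem comap_bot_mem_range_comap_algebraMap_iff [Algebra.FiniteType R S] [IsAlgClosed K]
    (φ : R →+* K) :
    PrimeSpectrum.comap φ ⊥ ∈ Set.range (PrimeSpectrum.comap (algebraMap R S)) ↔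
      ∃ f : S →+* K, f.comp (algebraMap R S) = φ := by
  constructor
  · intro h
    set p := PrimeSpectrum.comap φ ⊥
    have : p.asIdeal.IsPrime := p.isPrime
    let κ := p.asIdeal.ResidueField
    have : Nontrivial (κ ⊗[R] S) := (PrimeSpectrum.nontrivial_iff_mem_rangeComap p).mpr h
    let ι : κ →+* K := Ideal.ResidueField.lift p.asIdeal φ le_rfl
      fun x hx ↦ (show φ x ≠ 0 from fun h ↦ hx h).isUnit
    let _ : Algebra κ K := ι.toAlgebra
    obtain ⟨f⟩ := nonempty_algHom_of_finiteType_of_isAlgClosed κ (κ ⊗[R] S) K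
    refine ⟨f.toRingHom.comp
      (Algebra.TensorProduct.includeRight (R := R) (A := κ) (B := S)).toRingHom, ?_⟩
    ext r
    calc f (1 ⊗ₜ algebraMap R S r) = f (algebraMap κ _ (algebraMap R κ r)) := by
          rw [← Algebra.TensorProduct.tmul_one_eq_one_tmul]; rfl
      _ = φ r := (f.commutes _).trans (Ideal.ResidueField.lift_algebraMap ..)
  · rintro ⟨f, rfl⟩
    exact ⟨PrimeSpectrum.comap f ⊥, rfl⟩

end GeometricPoints

section PolynomialRoots

theorem ofFn_map {R S : Type*} [Semiring R] [Semiring S] [DecidableEq R] [DecidableEq S] {n : ℕ}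
    (v : Fin n → R) (f : R →+* S) : (ofFn n v).map f = ofFn n (f ∘ v) := by
  simp [ofFn_eq_sum_monomial, Polynomial.map_sum]

theorem dvd_trailingCoeff_of_isRoot {R : Type*} [CommRing R] [IsDomain R] {p : R[X]} {a : R}
    (ha : a ≠ 0) (hp : p.IsRoot a) : a ∣ p.trailingCoeff := by
  obtain ⟨q, rfl⟩ := dvd_iff_isRoot.mpr hp
  have hX : (X - C a).trailingCoeff = -a := by
    rw [trailingCoeff, natTrailingDegree_eq_zero.mpr (.inr (by simpa using ha))]
    simp
  rw [trailingCoeff_mul, hX]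
  exact (Dvd.intro _ rfl : a ∣ a * -q.trailingCoeff).trans (by simp)

theorem exists_root_natDegree_le {L : Type*} [Field L] {P : L[X][X]} {D : ℕ}
    (hP : ∀ k, (P.coeff k).natDegree ≤ D) (h : ∃ Q, P.IsRoot Q) :
    ∃ Q : L[X], Q.natDegree ≤ D ∧ P.IsRoot Q := by
  obtain ⟨Q, hQ⟩ := h
  rcases eq_or_ne P 0 with rfl | hP0
  · exact ⟨0, by simp, by simp⟩
  rcases eq_or_ne Q 0 with rfl | hQ0
  · exact ⟨0, by simp, hQ⟩
  exact ⟨Q, (natDegree_le_of_dvd (dvd_trailingCoeff_of_isRoot hQ0 hQ)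
    (trailingCoeff_nonzero_iff_nonzero.mpr hP0)).trans (hP _), hQ⟩

theorem isRoot_map_mapRingHom {R S : Type*} [CommRing R] [CommRing S] {P : R[X][X]} {Q : R[X]}
    (f : R →+* S) (h : P.IsRoot Q) : (P.map (mapRingHom f)).IsRoot (Q.map f) := by
  simpa using h.map (f := mapRingHom f)

end PolynomialRoots

section RootAlgebra

open scoped Classical in
/-- The value of `P` at the polynomial of degree at most `D` with indeterminate coefficients. -/
def genericValue {R : Type*} [CommRing R] (D : ℕ) (P : R[X][X]) :
    (MvPolynomial (Fin (D + 1)) R)[X] :=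
  (P.map (mapRingHom MvPolynomial.C)).eval (ofFn (D + 1) MvPolynomial.X)

/-- The `R`-algebra representing the roots in `L[X]`, of degree at most `D`, of `P ∈ R[X][Y]`. -/
abbrev RootAlgebra {R : Type*} [CommRing R] (D : ℕ) (P : R[X][X]) :=
  MvPolynomial (Fin (D + 1)) R ⧸ Ideal.span (Set.range (genericValue D P).coeff)

variable {R L : Type*} [CommRing R] [CommRing L]

theorem genericValue_map_eval₂Hom [DecidableEq L] (D : ℕ) (P : R[X][X]) (φ : R →+* L)
    (v : Fin (D + 1) → L) :
    (genericValue D P).map (MvPolynomial.eval₂Hom φ v) =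
      (P.map (mapRingHom φ)).eval (ofFn (D + 1) v) := by
  classical
  have hC : (MvPolynomial.eval₂Hom φ v).comp MvPolynomial.C = φ := by ext; simp
  have hX : MvPolynomial.eval₂Hom φ v ∘ MvPolynomial.X = v := by ext; simp
  rw [genericValue, ← coe_mapRingHom, ← eval_map_apply, Polynomial.map_map, mapRingHom_comp, hC,
    coe_mapRingHom, ofFn_map, hX]

theorem exists_ringHom_rootAlgebra_iff (D : ℕ) (P : R[X][X]) (φ : R →+* L) :
    (∃ f : RootAlgebra D P →+* L, f.comp (algebraMap R _) = φ) ↔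
      ∃ Q : L[X], Q.natDegree ≤ D ∧ (P.map (mapRingHom φ)).IsRoot Q := by
  classical
  constructor
  · rintro ⟨f, rfl⟩
    let v : Fin (D + 1) → L := fun i ↦ f (Ideal.Quotient.mk _ (MvPolynomial.X i))
    refine ⟨ofFn (D + 1) v, Nat.lt_succ_iff.mp (ofFn_natDegree_lt (by lia) v), ?_⟩
    have hf : MvPolynomial.eval₂Hom (f.comp (algebraMap R _)) v = f.comp (Ideal.Quotient.mk _) := by
      apply MvPolynomial.ringHom_ext
      · exact fun r ↦ by simp; rfl
      · exact fun i ↦ by simp [v]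
    rw [IsRoot, ← genericValue_map_eval₂Hom, hf]
    ext k
    simp [Ideal.Quotient.eq_zero_iff_mem.mpr (Ideal.subset_span (Set.mem_range_self k))]
  · rintro ⟨Q, hQ, hroot⟩
    rw [← ofFn_comp_toFn_eq_id_of_natDegree_lt (Nat.lt_succ_iff.mpr hQ), IsRoot,
      ← genericValue_map_eval₂Hom] at hroot
    refine ⟨Ideal.Quotient.lift _ (MvPolynomial.eval₂Hom φ (toFn (D + 1) Q)) fun a ha ↦ ?_, ?_⟩
    · refine (Ideal.span_le (I := RingHom.ker _)).mpr ?_ ha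
      rintro _ ⟨k, rfl⟩
      simpa using congr(coeff $hroot k)
    · ext r
      exact MvPolynomial.eval₂Hom_C φ (toFn (D + 1) Q) r

theorem isConstructible_range_comap_algebraMap_rootAlgebra [IsNoetherianRing R] (D : ℕ)
    (P : R[X][X]) :
    Topology.IsConstructible
      (Set.range (PrimeSpectrum.comap (algebraMap R (RootAlgebra D P)))) :=
  PrimeSpectrum.isConstructible_range_comap <|
    RingHom.FinitePresentation.of_finiteType.mp (RingHom.finiteType_algebraMap.mpr inferInstance)

theorem comap_bot_mem_range_comap_rootAlgebra_iff {K : Type*} [Field K] [IsAlgClosed K] {D : ℕ}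
    {P : R[X][X]} {φ : R →+* K} (hD : ∀ k, (P.coeff k).natDegree ≤ D) :
    PrimeSpectrum.comap φ ⊥ ∈
        Set.range (PrimeSpectrum.comap (algebraMap R (RootAlgebra D P))) ↔
      ∃ Q : K[X], (P.map (mapRingHom φ)).IsRoot Q := by
  rw [comap_bot_mem_range_comap_algebraMap_iff, exists_ringHom_rootAlgebra_iff]
  refine ⟨fun ⟨Q, _, hQ⟩ ↦ ⟨Q, hQ⟩, exists_root_natDegree_le fun k ↦ ?_⟩
  rw [coeff_map]
  exact natDegree_map_le.trans (hD k)

end RootAlgebra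

section Eliminant

theorem totalDegree_aeval_le_mul {σ τ R S : Type*} [CommSemiring R] [CommSemiring S] [Algebra R S]
    {v : σ → MvPolynomial τ S} {D : ℕ} (hv : ∀ i, (v i).totalDegree ≤ D) (p : MvPolynomial σ R) :
    (MvPolynomial.aeval v p).totalDegree ≤ p.totalDegree * D := by
  rw [MvPolynomial.aeval_def, MvPolynomial.eval₂_eq]
  refine MvPolynomial.totalDegree_finsetSum_le fun s hs ↦ ?_
  calc
    _ ≤ 0 + ∑ i ∈ s.support, s i * (v i).totalDegree := by
      refine (MvPolynomial.totalDegree_mul _ _).trans (add_le_add ?_ ?_)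
      · rw [MvPolynomial.algebraMap_apply, MvPolynomial.totalDegree_C]
      · exact (MvPolynomial.totalDegree_finsetProd _ _).trans
          (Finset.sum_le_sum fun i _ ↦ MvPolynomial.totalDegree_pow _ _)
    _ ≤ (∑ i ∈ s.support, s i) * D := by
      rw [zero_add, Finset.sum_mul]
      gcongr with i
      exact hv i
    _ ≤ p.totalDegree * D := Nat.mul_le_mul_right _ (MvPolynomial.le_totalDegree hs)

variable (S : Type*) [CommRing S]

open scoped Classical in
/-- The polynomial of degree at most `D` in each of two variables whose coefficients are
indeterminates: it specializes to every such polynomial over an `S`-algebra. -/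
def universalPolynomial (D : ℕ) : (MvPolynomial (Fin (D + 1) × Fin (D + 1)) S)[X][X] :=
  ofFn (D + 1) fun k ↦ ofFn (D + 1) fun l ↦ MvPolynomial.X (k, l)

theorem natDegree_coeff_universalPolynomial_le (D k : ℕ) :
    ((universalPolynomial S D).coeff k).natDegree ≤ D := by
  classical
  by_cases hk : k < D + 1
  · rw [universalPolynomial, ofFn_coeff_eq_val_of_lt _ hk]
    exact Nat.lt_succ_iff.mp (ofFn_natDegree_lt (by lia) _)
  · simp [universalPolynomial, not_lt.mp hk]

theorem universalPolynomial_map_aeval {R : Type*} [CommRing R] [Algebra S R] {D : ℕ} {P : R[X][X]}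
    (hY : P.natDegree ≤ D) (hX : ∀ k, (P.coeff k).natDegree ≤ D) :
    (universalPolynomial S D).map (mapRingHom
      (MvPolynomial.aeval (R := S) fun i : Fin (D + 1) × Fin (D + 1) ↦
        (P.coeff i.1).coeff i.2).toRingHom) = P := by
  classical
  conv_rhs => rw [← ofFn_comp_toFn_eq_id_of_natDegree_lt (Nat.lt_succ_iff.mpr hY)]
  rw [universalPolynomial, ofFn_map]
  congr 1
  ext1 k
  rw [Function.comp_apply, coe_mapRingHom, ofFn_map, toFn, LinearMap.pi_apply, lcoeff_apply,
    ← ofFn_comp_toFn_eq_id_of_natDegree_lt (Nat.lt_succ_iff.mpr (hX k))]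
  congr 1
  ext1 l
  simp [toFn]

theorem exists_eliminant_totalDegree_le.{u, v, w} [IsNoetherianRing S] (D : ℕ) :
    ∃ M : ℕ, ∀ {σ : Type u} {K : Type v} [Field K] [IsAlgClosed K]
      {P : (MvPolynomial σ S)[X][X]} {ψ : MvPolynomial σ S →+* K},
      P.natDegree ≤ D → (∀ k, (P.coeff k).natDegree ≤ D) →
      (∀ k l, ((P.coeff k).coeff l).totalDegree ≤ D) → Function.Injective ψ →
      (¬ ∃ Q : K[X], (P.map (mapRingHom ψ)).IsRoot Q) →
      ∃ h : MvPolynomial σ S, h ≠ 0 ∧ h.totalDegree ≤ M ∧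
        ∀ {L : Type w} [Field L] [IsAlgClosed L] (χ : MvPolynomial σ S →+* L),
          (∃ Q : L[X], (P.map (mapRingHom χ)).IsRoot Q) → χ h = 0 := by
  obtain ⟨G, hG⟩ := exists_finset_separating_of_isConstructible
    (isConstructible_range_comap_algebraMap_rootAlgebra D (universalPolynomial S D))
  refine ⟨G.sup MvPolynomial.totalDegree * D,
    fun {σ K} _ _ {P ψ} hY hX hdeg hψ hroot ↦ ?_⟩
  obtain ⟨θ, hθ, hθdeg⟩ : ∃ θ : MvPolynomial (Fin (D + 1) × Fin (D + 1)) S →+* MvPolynomial σ S,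
      (universalPolynomial S D).map (mapRingHom θ) = P ∧
        ∀ r, (θ r).totalDegree ≤ r.totalDegree * D :=
    ⟨_, universalPolynomial_map_aeval S hY hX,
      totalDegree_aeval_le_mul fun i ↦ hdeg i.1 i.2⟩
  have hX' := natDegree_coeff_universalPolynomial_le S D
  obtain ⟨r, hrG, hr, hspec⟩ := hG (PrimeSpectrum.comap (ψ.comp θ) ⊥) <| by
    rwa [comap_bot_mem_range_comap_rootAlgebra_iff hX', ← mapRingHom_comp, ← Polynomial.map_map, hθ]
  refine ⟨θ r, fun h ↦ hr (show ψ (θ r) = 0 by rw [h, map_zero]),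
    (hθdeg r).trans (Nat.mul_le_mul_right D (Finset.le_sup hrG)), fun {L} _ _ χ hχ ↦ ?_⟩
  refine hspec (PrimeSpectrum.comap (χ.comp θ) ⊥) ?_ fun s (hs : ψ (θ s) = 0) ↦ ?_
  · rwa [comap_bot_mem_range_comap_rootAlgebra_iff hX', ← mapRingHom_comp, ← Polynomial.map_map, hθ]
  · change χ (θ s) = 0
    rw [(map_eq_zero_iff ψ hψ).mp hs, map_zero]

end Eliminant

section Descent

open IntermediateField

theorem card_le_natDegree_of_isRoot_map {k E M : Type*} [Field k] [Field E] [Field M]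
    [Algebra k E] [Algebra k M] [Fintype (E →ₐ[k] M)] {P : k[X][X]} (hP : P ≠ 0) {Q : E[X]}
    (hQ : (P.map (mapRingHom (algebraMap k E))).IsRoot Q)
    (hinj : Function.Injective fun σ : E →ₐ[k] M ↦ Q.map (σ : E →+* M)) :
    Fintype.card (E →ₐ[k] M) ≤ P.natDegree := by
  classical
  set PM : M[X][X] := P.map (mapRingHom (algebraMap k M))
  have hPM : PM ≠ 0 :=
    (Polynomial.map_ne_zero_iff (map_injective _ (algebraMap k M).injective)).mpr hP
  have hroot (σ : E →ₐ[k] M) : Q.map (σ : E →+* M) ∈ PM.roots := by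
    rw [mem_roots hPM]
    have hPσ : PM = (P.map (mapRingHom (algebraMap k E))).map (mapRingHom (σ : E →+* M)) := by
      rw [Polynomial.map_map, mapRingHom_comp, σ.comp_algebraMap]
    exact hPσ ▸ isRoot_map_mapRingHom _ hQ
  calc Fintype.card (E →ₐ[k] M)
      = (Finset.univ.image fun σ : E →ₐ[k] M ↦ Q.map (σ : E →+* M)).card := by
        rw [Finset.card_image_of_injective _ hinj, Finset.card_univ]
    _ ≤ PM.roots.toFinset.card := Finset.card_le_card fun p hp ↦ by
        obtain ⟨σ, -, rfl⟩ := Finset.mem_image.mp hp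
        exact Multiset.mem_toFinset.mpr (hroot σ)
    _ ≤ PM.natDegree := (Multiset.toFinset_card_le _).trans (card_roots' _)
    _ ≤ P.natDegree := natDegree_map_le

theorem coeff_mem_adjoin_coeffs {k M : Type*} [Field k] [Field M] [Algebra k M] (Q : M[X]) (i : ℕ) :
    Q.coeff i ∈ adjoin k (Q.coeffs : Set M) := by
  by_cases h : Q.coeff i = 0
  · exact h ▸ zero_mem _
  · exact subset_adjoin _ _ (coeff_mem_coeffs h)

theorem finrank_adjoin_coeffs_le_natDegree {k M : Type*} [Field k] [CharZero k] [Field M]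
    [IsAlgClosed M] [Algebra k M] {P : k[X][X]} (hP : P ≠ 0) {Q : M[X]}
    (hQ : (P.map (mapRingHom (algebraMap k M))).IsRoot Q)
    [FiniteDimensional k (adjoin k (Q.coeffs : Set M))] :
    Module.finrank k (adjoin k (Q.coeffs : Set M)) ≤ P.natDegree := by
  let E := adjoin k (Q.coeffs : Set M)
  obtain ⟨QE, hQE⟩ : ∃ QE : E[X], QE.map (algebraMap E M) = Q :=
    (lifts_iff_coeff_lifts Q).mpr fun i ↦ ⟨⟨_, coeff_mem_adjoin_coeffs Q i⟩, rfl⟩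
  have hroot : (P.map (mapRingHom (algebraMap k E))).IsRoot QE := by
    apply map_injective _ (algebraMap E M).injective
    rw [← coe_mapRingHom, ← eval_map_apply, Polynomial.map_map, mapRingHom_comp,
      ← IsScalarTower.algebraMap_eq, coe_mapRingHom, hQE, Polynomial.map_zero]
    exact hQ
  rw [← AlgHom.card k E M]
  refine card_le_natDegree_of_isRoot_map hP hroot fun σ τ h ↦ ?_
  refine algHom_ext_of_eq_adjoin (F := k) (S := E) rfl fun x hx ↦ ?_
  obtain ⟨i, -, rfl⟩ := mem_coeffs_iff.mp hx
  have hcoeff : (⟨Q.coeff i, coeff_mem_adjoin_coeffs Q i⟩ : E) = QE.coeff i :=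
    Subtype.ext (congr(coeff $hQE i).symm.trans (coeff_map ..))
  have := congr(coeff $h i)
  rw [coeff_map, coeff_map] at this
  exact hcoeff ▸ this

theorem exists_adjoin_simple_eq_of_finiteDimensional {k M : Type*} [Field k] [Field M] [Algebra k M]
    (E : IntermediateField k M) [FiniteDimensional k E] [Algebra.IsSeparable k E] :
    ∃ α : M, IsIntegral k α ∧ k⟮α⟯ = E := by
  obtain ⟨α, hα⟩ := Field.exists_primitive_element k E
  refine ⟨α, (Algebra.IsIntegral.isIntegral α).map E.val, ?_⟩
  rw [← lift_adjoin_simple, hα, lift_top]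

theorem nonempty_adjoinRoot_algEquiv_adjoin {N M : Type*} [Field N] [Field M] [Algebra N M]
    {F : N[X]} (hF : Irreducible F) {q : M} (hq : aeval q F = 0) :
    Nonempty (AdjoinRoot F ≃ₐ[N] N⟮q⟯) := by
  have hint : IsIntegral N q := IsAlgebraic.isIntegral ⟨F, hF.ne_zero, hq⟩
  have hassoc : Associated F (minpoly N q) :=
    ((minpoly.irreducible hint).associated_of_dvd hF (minpoly.dvd N q hq)).symm
  exact ⟨(AdjoinRoot.algEquivOfAssociated N _ _ hassoc).trans (adjoinRootEquivAdjoin N hint)⟩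

theorem irreducible_and_nonempty_adjoinRoot_algEquiv {N M : Type*} [Field N] [Field M]
    [Algebra N M] {F g : N[X]} {q α : M} (hF : Irreducible F) (hq : aeval q F = 0) (hg : g ≠ 0)
    (hα : aeval α g = 0) (hmem : q ∈ N⟮α⟯) (hdeg : g.natDegree ≤ F.natDegree) :
    Irreducible g ∧ Nonempty (AdjoinRoot g ≃ₐ[N] AdjoinRoot F) := by
  have hαint : IsIntegral N α := IsAlgebraic.isIntegral ⟨g, hg, hα⟩
  obtain ⟨eF⟩ := nonempty_adjoinRoot_algEquiv_adjoin hF hq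
  have hfinrank : Module.finrank N N⟮q⟯ = F.natDegree := by
    rw [← eF.toLinearEquiv.finrank_eq, (AdjoinRoot.powerBasis hF.ne_zero).finrank,
      AdjoinRoot.powerBasis_dim]
  have hle : N⟮q⟯ ≤ N⟮α⟯ := adjoin_simple_le_iff.mpr hmem
  have : FiniteDimensional N N⟮α⟯ := adjoin.finiteDimensional hαint
  have hdvd : minpoly N α ∣ g := minpoly.dvd N α hα
  have hgle : g.natDegree ≤ (minpoly N α).natDegree :=
    calc g.natDegree ≤ Module.finrank N N⟮q⟯ := hfinrank ▸ hdeg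
      _ ≤ Module.finrank N N⟮α⟯ := finrank_le_of_le_right hle
      _ = (minpoly N α).natDegree := adjoin.finrank hαint
  have hgirr : Irreducible g := (associated_of_dvd_of_natDegree_le hdvd hg hgle).irreducible
    (minpoly.irreducible hαint)
  have heq : N⟮q⟯ = N⟮α⟯ := eq_of_le_of_finrank_le hle <| by
    rw [hfinrank, adjoin.finrank hαint]
    exact (natDegree_le_of_dvd hdvd hg).trans hdeg
  obtain ⟨eg⟩ := nonempty_adjoinRoot_algEquiv_adjoin hgirr hα
  exact ⟨hgirr, ⟨eg.trans ((equivOfEq heq.symm).trans eF.symm)⟩⟩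

theorem exists_associated_map_of_isFractionRing {A k N : Type*} [CommRing A] [Field k] [Algebra A k]
    [IsFractionRing A k] [Field N] [Algebra A N] [Algebra k N] [IsScalarTower A k N]
    (g : k[X]) : ∃ G : A[X], Associated (G.map (algebraMap A N)) (g.map (algebraMap k N)) := by
  obtain ⟨b, hb, hG⟩ := IsLocalization.integerNormalization_spec (nonZeroDivisors A) g
  have : Nontrivial A := (algebraMap A k).domain_nontrivial
  have hb0 : algebraMap A k b ≠ 0 := IsFractionRing.to_map_ne_zero_of_mem_nonZeroDivisors hb
  refine ⟨IsLocalization.integerNormalization (nonZeroDivisors A) g, ?_⟩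
  rw [IsScalarTower.algebraMap_eq A k N, ← Polynomial.map_map, hG, algebra_compatible_smul k,
    smul_eq_C_mul, Polynomial.map_mul, map_C]
  exact associated_unit_mul_left _ _ (isUnit_C.mpr ((_root_.map_ne_zero _).mpr hb0).isUnit)

theorem eval_mem_adjoin_simple {k N M : Type*} [Field k] [Field N] [Field M] [Algebra k N]
    [Algebra N M] [Algebra k M] [IsScalarTower k N M] {α : M} {Q : M[X]}
    (hQ : ∀ i, Q.coeff i ∈ k⟮α⟯) (t : N) : Q.eval (algebraMap N M t) ∈ N⟮α⟯ := by
  have hle : k⟮α⟯ ≤ N⟮α⟯.restrictScalars k :=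
    adjoin_simple_le_iff.mpr (mem_adjoin_simple_self N α)
  rw [eval_eq_sum_range]
  exact sum_mem fun i _ ↦ mul_mem (hle (hQ i)) (pow_mem (IntermediateField.algebraMap_mem _ t) i)

theorem exists_irreducible_map_algebraMap_of_isRoot {k N M : Type*} [Field k] [CharZero k]
    [Field N] [Field M] [IsAlgClosed M] [Algebra k N] [Algebra N M] [Algebra k M]
    [IsScalarTower k N M] {t : N} {P : k[X][X]} {F : N[X]}
    (hPF : P.map (aeval t).toRingHom = F) (hF : Irreducible F)
    (hdeg : P.natDegree ≤ F.natDegree) {Q : M[X]} (hQint : ∀ i, IsIntegral k (Q.coeff i))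
    (hQ : (P.map (mapRingHom (algebraMap k M))).IsRoot Q) :
    ∃ g : k[X], Irreducible (g.map (algebraMap k N)) ∧
      Nonempty (AdjoinRoot (g.map (algebraMap k N)) ≃ₐ[N] AdjoinRoot F) := by
  have hP : P ≠ 0 := by
    rintro rfl
    exact hF.ne_zero (by simpa using hPF.symm)
  have : FiniteDimensional k (adjoin k (Q.coeffs : Set M)) :=
    finiteDimensional_adjoin fun x hx ↦ by
      obtain ⟨i, -, rfl⟩ := mem_coeffs_iff.mp hx
      exact hQint i
  obtain ⟨α, hα, hαQ⟩ := exists_adjoin_simple_eq_of_finiteDimensional (adjoin k (Q.coeffs : Set M))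
  have hroot : aeval (Q.eval (algebraMap N M t)) F = 0 := by
    have hcomp : (algebraMap N M).comp (aeval t).toRingHom =
        (evalRingHom (algebraMap N M t)).comp (mapRingHom (algebraMap k M)) := by
      ext
      · simp [← IsScalarTower.algebraMap_apply]
      · simp
    rw [← hPF, aeval_def, eval₂_map, hcomp, ← coe_evalRingHom, ← hom_eval₂, ← eval_map, hQ.eq_zero,
      map_zero]
  refine ⟨minpoly k α, irreducible_and_nonempty_adjoinRoot_algEquiv hF hroot
    ((minpoly.monic hα).map _).ne_zero ((aeval_map_algebraMap N α _).trans (minpoly.aeval k α))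
    (eval_mem_adjoin_simple (hαQ ▸ coeff_mem_adjoin_coeffs Q) t) ?_⟩
  calc ((minpoly k α).map (algebraMap k N)).natDegree = (minpoly k α).natDegree := natDegree_map _
    _ = Module.finrank k (adjoin k (Q.coeffs : Set M)) := by rw [← hαQ, adjoin.finrank hα]
    _ ≤ F.natDegree := (finrank_adjoin_coeffs_le_natDegree hP hQ).trans hdeg

theorem exists_adjoinRoot_algEquiv_of_isRoot {A N : Type*} [CommRing A] [IsDomain A] [CharZero A]
    [Field N] [Algebra A N] [FaithfulSMul A N] {t : N} (ht : Transcendental A t) {P : A[X][X]}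
    (hP : Irreducible (P.map (aeval t).toRingHom))
    (hroot : ∃ Q : (AlgebraicClosure (FractionRing A))[X],
      (P.map (mapRingHom (algebraMap A _))).IsRoot Q) :
    ∃ G : A[X], Irreducible (G.map (algebraMap A N)) ∧
      Nonempty (AdjoinRoot (G.map (algebraMap A N)) ≃ₐ[N]
        AdjoinRoot (P.map (aeval t).toRingHom)) := by
  let k := FractionRing A
  let _ : Algebra k N := FractionRing.liftAlgebra A N
  have : IsScalarTower A k N := FractionRing.isScalarTower_liftAlgebra A N
  let M := AlgebraicClosure N
  let e : AlgebraicClosure k →ₐ[k] M := IsAlgClosed.lift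
  have hmap : (P.map (mapRingHom (algebraMap A k))).map (aeval t).toRingHom =
      P.map (aeval t).toRingHom := by
    rw [Polynomial.map_map]
    congr 1
    ext <;> simp [← IsScalarTower.algebraMap_apply]
  have hdeg : (P.map (mapRingHom (algebraMap A k))).natDegree ≤
      (P.map (aeval t).toRingHom).natDegree :=
    natDegree_map_le.trans
      (natDegree_map_eq_of_injective (transcendental_iff_injective.mp ht) P).ge
  obtain ⟨Q, hQ⟩ := hroot
  have hQint (i : ℕ) : IsIntegral k ((Q.map (e : AlgebraicClosure k →+* M)).coeff i) := by
    rw [coeff_map]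
    exact (Algebra.IsIntegral.isIntegral (Q.coeff i)).map e
  have hQe : ((P.map (mapRingHom (algebraMap A k))).map (mapRingHom (algebraMap k M))).IsRoot
      (Q.map (e : AlgebraicClosure k →+* M)) := by
    have := isRoot_map_mapRingHom (e : AlgebraicClosure k →+* M) hQ
    rw [Polynomial.map_map, mapRingHom_comp, IsScalarTower.algebraMap_eq A k (AlgebraicClosure k),
      ← RingHom.comp_assoc, e.comp_algebraMap] at this
    rwa [Polynomial.map_map, mapRingHom_comp]
  obtain ⟨g, hg, ⟨eg⟩⟩ := exists_irreducible_map_algebraMap_of_isRoot hmap hP hdeg hQint hQe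
  obtain ⟨G, hG⟩ := exists_associated_map_of_isFractionRing (A := A) (N := N) g
  exact ⟨G, hG.symm.irreducible hg, ⟨(AdjoinRoot.algEquivOfAssociated N _ _ hG).trans eg⟩⟩

end Descent

section Irreducibility

theorem isLocalHom_mapRingHom_of_injective {R S : Type*} [CommRing R] [CommRing S] (f : R →+* S)
    [IsLocalHom f] (hf : Function.Injective f) : IsLocalHom (mapRingHom f) where
  map_nonunit p hp := by
    rw [coe_mapRingHom, isUnit_iff_coeff_isUnit_isNilpotent] at hp
    simp only [coeff_map, isUnit_map_iff, IsNilpotent.map_iff hf] at hp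
    exact isUnit_iff_coeff_isUnit_isNilpotent.mpr hp

theorem isLocalHom_mvPolynomial_map_of_injective {σ R S : Type*} [CommRing R] [CommRing S]
    (f : R →+* S) [IsLocalHom f] (hf : Function.Injective f) :
    IsLocalHom (MvPolynomial.map (σ := σ) f) where
  map_nonunit p hp := by
    rw [MvPolynomial.isUnit_iff] at hp ⊢
    simpa only [MvPolynomial.coeff_map, isUnit_map_iff, IsNilpotent.map_iff hf] using hp

variable {n : ℕ} {F : (MvPolynomial (Fin n) ℤ)[X]}

theorem AbsIrred.irreducible_toQ (hF : AbsIrred F) : Irreducible (toQ F) := by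
  let f := algebraMap ℚ (AlgebraicClosure ℚ)
  have := isLocalHom_mvPolynomial_map_of_injective (σ := Fin n) f f.injective
  have := isLocalHom_mapRingHom_of_injective _
    (MvPolynomial.map_injective (σ := Fin n) f f.injective)
  refine Irreducible.of_map (f := mapRingHom (MvPolynomial.map f)) ?_
  have hf : (MvPolynomial.map f).comp (MvPolynomial.map (Int.castRingHom ℚ)) =
      MvPolynomial.map (σ := Fin n) (Int.castRingHom (AlgebraicClosure ℚ)) := by
    ext <;> simp
  rw [coe_mapRingHom, toQ, Polynomial.map_map, hf]
  exact hF

theorem injective_algebraMap_comp_map_castRingHom (n : ℕ) :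
    Function.Injective ((algebraMap (MvPolynomial (Fin n) ℚ) (RF n)).comp
      (MvPolynomial.map (Int.castRingHom ℚ))) :=
  (IsFractionRing.injective (MvPolynomial (Fin n) ℚ) (RF n)).comp
    (MvPolynomial.map_injective _ Int.cast_injective)

theorem toFrac_eq_map (F : (MvPolynomial (Fin n) ℤ)[X]) :
    toFrac F = F.map ((algebraMap (MvPolynomial (Fin n) ℚ) (RF n)).comp
      (MvPolynomial.map (Int.castRingHom ℚ))) :=
  Polynomial.map_map ..

theorem irreducible_toFrac (hF : Irreducible (toQ F)) (hdeg : F.natDegree ≠ 0) :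
    Irreducible (toFrac F) := by
  let _ : NormalizedGCDMonoid (MvPolynomial (Fin n) ℚ) := Nonempty.some inferInstance
  have hdegQ : (toQ F).natDegree ≠ 0 := by
    rwa [toQ, natDegree_map_eq_of_injective (MvPolynomial.map_injective _ Int.cast_injective)]
  exact ((hF.isPrimitive hdegQ).irreducible_iff_irreducible_map_fraction_map (K := RF n)).mp hF

end Irreducibility

section GenericRoot

/-- `F ∈ R[Y,X₀,…,Xₘ]` regarded as a polynomial in `Y` (outer) and `X₀` (inner variable) over
`R[X₁,…,Xₘ]`. -/
abbrev splitFirst {R : Type*} [CommSemiring R] {m : ℕ} (F : (MvPolynomial (Fin (m + 1)) R)[X]) :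
    (MvPolynomial (Fin m) R)[X][X] :=
  F.map (MvPolynomial.finSuccEquiv R m).toRingHom

theorem degreeOf_rename_eq_zero_of_notMem_range {σ τ R : Type*} [CommSemiring R] {f : σ → τ} {i : τ}
    (hi : i ∉ Set.range f) (p : MvPolynomial σ R) : (MvPolynomial.rename f p).degreeOf i = 0 := by
  classical
  rw [MvPolynomial.degreeOf_def, Multiset.count_eq_zero, ← Multiset.mem_toFinset,
    ← MvPolynomial.vars_def]
  intro h
  obtain ⟨j, -, hj⟩ := Finset.mem_image.mp (MvPolynomial.vars_rename f p h)
  exact hi ⟨j, hj⟩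

theorem degX_map_rename_succ {R : Type*} [CommSemiring R] {m : ℕ}
    (G : (MvPolynomial (Fin m) R)[X]) :
    degX (G.map (MvPolynomial.rename Fin.succ).toRingHom) (0 : Fin (m + 1)) = 0 := by
  refine Finset.sup_eq_zero.mpr fun k _ ↦ ?_
  rw [coeff_map]
  exact degreeOf_rename_eq_zero_of_notMem_range (by simp) _

variable {m : ℕ}

theorem exists_irreducible_degX_eq_zero_of_isRoot {F : (MvPolynomial (Fin (m + 1)) ℤ)[X]}
    (hF : Irreducible (toFrac F))
    (hroot : ∃ Q : (AlgebraicClosure (FractionRing (MvPolynomial (Fin m) ℤ)))[X],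
      ((splitFirst F).map (mapRingHom (algebraMap (MvPolynomial (Fin m) ℤ) _))).IsRoot Q) :
    ∃ G : (MvPolynomial (Fin (m + 1)) ℤ)[X], degX G 0 = 0 ∧ Irreducible (toFrac G) ∧
      Nonempty (AdjoinRoot (toFrac G) ≃ₐ[RF (m + 1)] AdjoinRoot (toFrac F)) := by
  let N := RF (m + 1)
  let ι : MvPolynomial (Fin (m + 1)) ℤ →+* N :=
    (algebraMap (MvPolynomial (Fin (m + 1)) ℚ) N).comp (MvPolynomial.map (Int.castRingHom ℚ))
  have hι : Function.Injective ι := injective_algebraMap_comp_map_castRingHom (m + 1)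
  let _ : Algebra (MvPolynomial (Fin m) ℤ) N :=
    (ι.comp (MvPolynomial.rename Fin.succ).toRingHom).toAlgebra
  have : FaithfulSMul (MvPolynomial (Fin m) ℤ) N := (faithfulSMul_iff_algebraMap_injective _ _).mpr
    (hι.comp (MvPolynomial.rename_injective _ (Fin.succ_injective m)))
  let t : N := ι (MvPolynomial.X 0)
  have haeval : (aeval (R := MvPolynomial (Fin m) ℤ) t).toRingHom.comp
      (MvPolynomial.finSuccEquiv ℤ m).toRingHom = ι := by
    apply MvPolynomial.ringHom_ext
    · intro r
      simp
    · refine Fin.cases ?_ fun s ↦ ?_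
      · simp [MvPolynomial.finSuccEquiv_X_zero, t]
      · simp [MvPolynomial.finSuccEquiv_X_succ, RingHom.algebraMap_toAlgebra]
  have ht : Transcendental (MvPolynomial (Fin m) ℤ) t := by
    refine transcendental_iff_injective.mpr (Function.Injective.of_comp_right
      (g := MvPolynomial.finSuccEquiv ℤ m) ?_ (MvPolynomial.finSuccEquiv ℤ m).surjective)
    exact (congrArg DFunLike.coe haeval ▸ hι :)
  have hmap :
      (splitFirst F).map (aeval (R := MvPolynomial (Fin m) ℤ) t).toRingHom = toFrac F := by
    rw [Polynomial.map_map, haeval, toFrac_eq_map]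
  obtain ⟨G, hG, ⟨eG⟩⟩ := exists_adjoinRoot_algEquiv_of_isRoot ht (hmap ▸ hF) hroot
  have hGmap : toFrac (G.map (MvPolynomial.rename Fin.succ).toRingHom) =
      G.map (algebraMap (MvPolynomial (Fin m) ℤ) N) := by
    rw [toFrac_eq_map, Polynomial.map_map]
    rfl
  refine ⟨_, degX_map_rename_succ G, ?_⟩
  rw [hGmap, ← hmap]
  exact ⟨hG, ⟨eG⟩⟩

theorem injective_algebraMap_algebraicClosure_fractionRing (A : Type*) [CommRing A] [IsDomain A] :
    Function.Injective (algebraMap A (AlgebraicClosure (FractionRing A))) := by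
  rw [IsScalarTower.algebraMap_eq A (FractionRing A)]
  exact (algebraMap (FractionRing A) _).injective.comp (IsFractionRing.injective A _)

theorem not_exists_isRoot_splitFirst {F : (MvPolynomial (Fin (m + 1)) ℤ)[X]}
    (hF : Irreducible (toQ F))
    (hgen : ∀ G : (MvPolynomial (Fin (m + 1)) ℤ)[X], Irreducible (toFrac G) →
      Nonempty (AdjoinRoot (toFrac G) ≃ₐ[RF (m + 1)] AdjoinRoot (toFrac F)) → 0 < degX G 0) :
    ¬ ∃ Q : (AlgebraicClosure (FractionRing (MvPolynomial (Fin m) ℤ)))[X],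
      ((splitFirst F).map (mapRingHom (algebraMap (MvPolynomial (Fin m) ℤ) _))).IsRoot Q := by
  intro hroot
  by_cases hdeg : F.natDegree = 0
  · obtain ⟨c, rfl⟩ := natDegree_eq_zero.mp hdeg
    obtain ⟨Q, hQ⟩ := hroot
    have hc : c = 0 := by
      rw [splitFirst, map_C, map_C, IsRoot, eval_C, coe_mapRingHom, Polynomial.map_eq_zero_iff
        (injective_algebraMap_algebraicClosure_fractionRing _)] at hQ
      exact (map_eq_zero_iff _ (MvPolynomial.finSuccEquiv ℤ m).injective).mp hQ
    exact hF.ne_zero (by simp [toQ, hc])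
  · obtain ⟨G, hG0, hG, eG⟩ :=
      exists_irreducible_degX_eq_zero_of_isRoot (irreducible_toFrac hF hdeg) hroot
    exact (hgen G hG eG).ne' hG0

end GenericRoot

section Degrees

variable {R : Type*} [CommSemiring R] {m : ℕ}

theorem add_totalDegree_coeff_le_totalDeg {n k : ℕ} {F : (MvPolynomial (Fin n) R)[X]}
    (hk : F.coeff k ≠ 0) : k + (F.coeff k).totalDegree ≤ totalDeg F :=
  Finset.le_sup (f := fun k ↦ k + (F.coeff k).totalDegree) (mem_support_iff.mpr hk)

theorem natDegree_le_totalDeg {n : ℕ} (F : (MvPolynomial (Fin n) R)[X]) :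
    F.natDegree ≤ totalDeg F := by
  rcases eq_or_ne F 0 with rfl | hF
  · simp
  · exact (Nat.le_add_right _ _).trans
      (add_totalDegree_coeff_le_totalDeg (leadingCoeff_ne_zero.mpr hF))

theorem totalDegree_coeff_le_totalDeg {n : ℕ} (F : (MvPolynomial (Fin n) R)[X]) (k : ℕ) :
    (F.coeff k).totalDegree ≤ totalDeg F := by
  by_cases hk : F.coeff k = 0
  · simp [hk]
  · exact (Nat.le_add_left _ _).trans (add_totalDegree_coeff_le_totalDeg hk)

theorem natDegree_coeff_splitFirst_le (F : (MvPolynomial (Fin (m + 1)) R)[X]) (k : ℕ) :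
    ((splitFirst F).coeff k).natDegree ≤ totalDeg F := by
  rw [coeff_map]
  exact (MvPolynomial.natDegree_finSuccEquiv _).trans_le
    ((MvPolynomial.degreeOf_le_totalDegree _ _).trans (totalDegree_coeff_le_totalDeg F k))

theorem totalDegree_coeff_coeff_splitFirst_le (F : (MvPolynomial (Fin (m + 1)) R)[X]) (k l : ℕ) :
    (((splitFirst F).coeff k).coeff l).totalDegree ≤ totalDeg F := by
  rw [coeff_map]
  change ((MvPolynomial.finSuccEquiv R m (F.coeff k)).coeff l).totalDegree ≤ totalDeg F
  by_cases h0 : (MvPolynomial.finSuccEquiv R m (F.coeff k)).coeff l = 0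
  · simp [h0]
  · exact (Nat.le_add_right _ _).trans
      ((MvPolynomial.totalDegree_coeff_finSuccEquiv_add_le (F.coeff k) l h0).trans
        (totalDegree_coeff_le_totalDeg F k))

end Degrees

section Counting

theorem setOf_forall_abs_le_eq_piFinset {ι : Type*} [Fintype ι] [DecidableEq ι] (B : ℝ) :
    {x : ι → ℤ | ∀ i, |(x i : ℝ)| ≤ B} = Fintype.piFinset fun _ : ι ↦ Finset.Icc (-⌊B⌋) ⌊B⌋ := by
  ext x
  rw [Finset.mem_coe, Fintype.mem_piFinset]
  refine forall_congr' fun i ↦ ?_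
  rw [Finset.mem_Icc, ← abs_le, Int.le_floor, Int.cast_abs]

theorem ncard_abs_le_eval_eq_zero_le {k : ℕ} {h : MvPolynomial (Fin (k + 1)) ℤ} (hh : h ≠ 0)
    {B : ℝ} (hB : 1 ≤ B) :
    ({x : Fin (k + 1) → ℤ | (∀ i, |(x i : ℝ)| ≤ B) ∧ MvPolynomial.eval x h = 0}.ncard : ℝ) ≤
      h.totalDegree * (3 * B) ^ k := by
  set S := Finset.Icc (-⌊B⌋) ⌊B⌋
  have hset : {x : Fin (k + 1) → ℤ | (∀ i, |(x i : ℝ)| ≤ B) ∧ MvPolynomial.eval x h = 0} =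
      {x ∈ Fintype.piFinset fun _ : Fin (k + 1) ↦ S | MvPolynomial.eval x h = 0} := by
    rw [Set.ofPred_and, setOf_forall_abs_le_eq_piFinset, Finset.coe_filter]
    rfl
  have hfloor : 1 ≤ ⌊B⌋ := Int.le_floor.mpr (by exact_mod_cast hB)
  have hScard : (S.card : ℤ) = 2 * ⌊B⌋ + 1 := by
    rw [Int.card_Icc]
    omega
  have hSpos : (0 : ℚ≥0) < S.card := by
    exact_mod_cast (by omega : (0 : ℤ) < S.card)
  have hSle : (S.card : ℝ) ≤ 3 * B :=
    calc (S.card : ℝ) = 2 * ⌊B⌋ + 1 := by exact_mod_cast hScard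
      _ ≤ 3 * B := by linarith [Int.floor_le B]
  have hzippel := MvPolynomial.schwartz_zippel_totalDegree hh S
  rw [div_le_div_iff₀ (pow_pos hSpos _) hSpos, pow_succ, ← mul_assoc] at hzippel
  rw [hset, Set.ncard_coe_finset]
  calc (_ : ℝ) ≤ h.totalDegree * (S.card : ℝ) ^ k := by
        exact_mod_cast le_of_mul_le_mul_right hzippel hSpos
    _ ≤ h.totalDegree * (3 * B) ^ k := by gcongr

variable {m : ℕ} {F : (MvPolynomial (Fin (m + 1)) ℤ)[X]}

theorem HasLinearFactorY.exists_isRoot {x : {i : Fin (m + 1) // i ≠ 0} → ℤ}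
    (hx : HasLinearFactorY (substKeepFirst 0 x F)) :
    ∃ Q : (AlgebraicClosure ℚ)[X], ((splitFirst F).map
      (mapRingHom ((Int.castRingHom (AlgebraicClosure ℚ)).comp
        (MvPolynomial.eval (x ∘ finSuccAboveEquiv 0))))).IsRoot Q := by
  obtain ⟨Q, H, hQH⟩ := hx
  let φ : MvPolynomial (Fin (m + 1)) (AlgebraicClosure ℚ) →+* (AlgebraicClosure ℚ)[X] :=
    (MvPolynomial.aeval fun _ ↦ X).toRingHom
  have hmap : (splitFirst F).map
      (mapRingHom ((Int.castRingHom (AlgebraicClosure ℚ)).comp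
        (MvPolynomial.eval (x ∘ finSuccAboveEquiv 0)))) =
      (substKeepFirst 0 x F).map φ := by
    rw [splitFirst, substKeepFirst, Polynomial.map_map, Polynomial.map_map]
    congr 1
    apply MvPolynomial.ringHom_ext
    · intro r
      simp
    · refine Fin.cases ?_ fun j ↦ ?_
      · simp [φ, MvPolynomial.finSuccEquiv_X_zero]
      · simp [φ, MvPolynomial.finSuccEquiv_X_succ, finSuccAboveEquiv_apply]
  refine ⟨φ Q, ?_⟩
  rw [hmap, hQH, Polynomial.map_mul, IsRoot, eval_mul]
  simp

theorem ncard_hasLinearFactorY_le_of_forall_eval_eq_zero {h : MvPolynomial (Fin m) ℤ}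
    (hvanish : ∀ x : {i : Fin (m + 1) // i ≠ 0} → ℤ, HasLinearFactorY (substKeepFirst 0 x F) →
      MvPolynomial.eval (x ∘ finSuccAboveEquiv 0) h = 0) (B : ℝ) :
    {x : {i : Fin (m + 1) // i ≠ 0} → ℤ |
        (∀ i, |(x i : ℝ)| ≤ B) ∧ HasLinearFactorY (substKeepFirst 0 x F)}.ncard ≤
      {x : Fin m → ℤ | (∀ i, |(x i : ℝ)| ≤ B) ∧ MvPolynomial.eval x h = 0}.ncard := by
  exact Set.ncard_le_ncard_of_injOn (· ∘ finSuccAboveEquiv 0)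
    (fun x hx ↦ ⟨fun j ↦ hx.1 _, hvanish x hx.2⟩)
    (finSuccAboveEquiv 0).surjective.injective_comp_right.injOn
    ((Finset.finite_toSet _).subset fun x hx ↦ (setOf_forall_abs_le_eq_piFinset B).subset hx.1)

theorem exists_ncard_hasLinearFactorY_le (k D : ℕ) :
    ∃ C : ℝ, 0 < C ∧ ∀ F : (MvPolynomial (Fin (k + 2)) ℤ)[X], totalDeg F ≤ D →
      (¬ ∃ Q : (AlgebraicClosure (FractionRing (MvPolynomial (Fin (k + 1)) ℤ)))[X],
        ((splitFirst F).map (mapRingHom (algebraMap (MvPolynomial (Fin (k + 1)) ℤ) _))).IsRoot Q) →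
      ∀ B : ℝ, 1 ≤ B → ({x : {i : Fin (k + 2) // i ≠ 0} → ℤ |
        (∀ i, |(x i : ℝ)| ≤ B) ∧ HasLinearFactorY (substKeepFirst 0 x F)}.ncard : ℝ) ≤
          C * B ^ k := by
  obtain ⟨M, hM⟩ := exists_eliminant_totalDegree_le.{0, 0, 0, 0} ℤ D
  refine ⟨(M + 1) * 3 ^ k, by positivity, fun F hD hroot B hB ↦ ?_⟩
  obtain ⟨h, hh, hhM, hvanish⟩ := hM ((natDegree_map_le.trans (natDegree_le_totalDeg F)).trans hD)
    (fun l ↦ (natDegree_coeff_splitFirst_le F l).trans hD)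
    (fun l i ↦ (totalDegree_coeff_coeff_splitFirst_le F l i).trans hD)
    (injective_algebraMap_algebraicClosure_fractionRing _) hroot
  calc (_ : ℝ) ≤ _ := Nat.cast_le.mpr <| ncard_hasLinearFactorY_le_of_forall_eval_eq_zero
        (fun x hx ↦ Int.cast_eq_zero.mp (hvanish _ hx.exists_isRoot)) B
    _ ≤ h.totalDegree * (3 * B) ^ k := ncard_abs_le_eval_eq_zero_le hh hB
    _ ≤ (M + 1) * (3 * B) ^ k := by
      gcongr
      exact_mod_cast hhM.trans (Nat.le_succ M)
    _ = (M + 1) * 3 ^ k * B ^ k := by ring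

end Counting

theorem statement13_general (n : ℕ) (hn : 2 ≤ n) (D : ℕ) :
    ∃ C : ℝ, 0 < C ∧
      ∀ F : Polynomial (MvPolynomial (Fin n) ℤ), Irreducible (toQ F) →
        (∀ G : Polynomial (MvPolynomial (Fin n) ℤ), Irreducible (toFrac G) →
          Nonempty (AdjoinRoot (toFrac G) ≃ₐ[RF n] AdjoinRoot (toFrac F)) →
            0 < degX G (⟨0, two_pos.trans_le hn⟩ : Fin n)) →
        totalDeg F ≤ D →
        ∀ B : ℝ, 1 ≤ B →
          (Set.ncard {x : {i : Fin n // i ≠ (⟨0, two_pos.trans_le hn⟩ : Fin n)} → ℤ |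
              (∀ i, |(x i : ℝ)| ≤ B) ∧
              HasLinearFactorY (substKeepFirst (⟨0, two_pos.trans_le hn⟩ : Fin n) x F)} : ℝ) ≤
            C * B ^ ((n : ℝ) - 2) := by
  obtain ⟨k, rfl⟩ := Nat.exists_eq_add_of_le' hn
  obtain ⟨C, hC, hcount⟩ := exists_ncard_hasLinearFactorY_le k D
  refine ⟨C, hC, fun F hF hgen hD B hB ↦ ?_⟩
  have hexp : ((k + 2 : ℕ) : ℝ) - 2 = k := by
    push_cast
    ring
  rw [hexp, Real.rpow_natCast]
  exact hcount F hD (not_exists_isRoot_splitFirst hF hgen) B hB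

theorem statement13 (n : ℕ) (hn : 2 ≤ n) (D : ℕ) :
    ∃ C : ℝ, 0 < C ∧
      ∀ F : Polynomial (MvPolynomial (Fin n) ℤ), IsGenuinePoly F → totalDeg F = D →
        ∀ B : ℝ, 1 ≤ B →
          (Set.ncard {x : {i : Fin n // i ≠ (⟨0, by omega⟩ : Fin n)} → ℤ |
              (∀ i, |(x i : ℝ)| ≤ B) ∧
              HasLinearFactorY (substKeepFirst (⟨0, by omega⟩ : Fin n) x F)} : ℝ) ≤
            C * B ^ ((n : ℝ) - 2) := by
  obtain ⟨C, hC, hcount⟩ := statement13_general n hn D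
  exact ⟨C, hC, fun F hF hD ↦ hcount F hF.1.irreducible_toQ (fun G hG e ↦ (hF.2 G hG e).2 _) hD.le⟩
end
end
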